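/- arXiv:2409.06465 — 2 statements merged into one kernel-verified Lean document; each statement's English description precedes it below -/
import Mathlib

section
/- Fix ν ≥ 2 and positive integers s,t, let f_{i,j} ∈ L¹([-π,π]; ℂ^{s×t}) for i,j = 1,…,ν, and let A_n be the ν×ν block matrix with (i,j) block T_{n_i,n_j}(f_{i,j}) where the block sizes satisfy n_j = n/ν + o(n) for j = 1,…,ν and n = n_1 + ⋯ + n_ν. Set F = (f_{i,j})_{i,j=1}^ν : [-π,π] → ℂ^{νs×νt}. Then {A_n}_n ∼_σ F, and if in addition F is Hermitian-valued then {A_n}_n ∼_λ F. -/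
open MeasureTheory Filter Topology Matrix
open scoped Real

noncomputable section

/-- Sum of `F` over the eigenvalues (with multiplicity) of a square complex matrix,
the eigenvalues being the roots of the characteristic polynomial. -/
def eigSum {ι : Type*} [Fintype ι] [DecidableEq ι] (F : ℂ → ℂ) (A : Matrix ι ι ℂ) : ℂ :=
  (A.charpoly.roots.map F).sum

/-- Sum of `F` over the singular values `σ_1, …, σ_{min(#rows,#cols)}` of a rectangular
complex matrix: the singular values are the square roots of the eigenvalues of `A * Aᴴ`,
discarding the `#rows - min(#rows,#cols)` superfluous zero ones. -/
def svSum {m n : Type*} [Fintype m] [Fintype n] [DecidableEq m]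
    (F : ℝ → ℂ) (A : Matrix m n ℂ) : ℂ :=
  (∑ i, F (Real.sqrt ((Matrix.isHermitian_mul_conjTranspose_self A).eigenvalues i))) -
    ((Fintype.card m - min (Fintype.card m) (Fintype.card n) : ℕ) : ℂ) * F 0

/-- `{A_n}_n ∼_σ f` : the matrix-sequence `A` is distributed as the matrix-valued
symbol `f : Ω → ℂ^{ρ×τ}` in the sense of the singular values (Weyl sense). -/
def DistributedSV {Θ : Type*} [MeasureSpace Θ] (Ω : Set Θ)
    {ρ τ : Type*} [Fintype ρ] [Fintype τ] [DecidableEq ρ]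
    (f : Θ → Matrix ρ τ ℂ)
    {ι κ : ℕ → Type} [∀ n, Fintype (ι n)] [∀ n, Fintype (κ n)] [∀ n, DecidableEq (ι n)]
    (A : ∀ n, Matrix (ι n) (κ n) ℂ) : Prop :=
  ∀ F : ℝ → ℂ, Continuous F → HasCompactSupport F →
    Tendsto
      (fun n => ((min (Fintype.card (ι n)) (Fintype.card (κ n)) : ℕ) : ℂ)⁻¹ * svSum F (A n))
      atTop
      (𝓝 (((volume Ω).toReal : ℂ)⁻¹ *
        ∫ θ in Ω, ((min (Fintype.card ρ) (Fintype.card τ) : ℕ) : ℂ)⁻¹ * svSum F (f θ)))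

/-- `{A_n}_n ∼_λ f` : the matrix-sequence `A` is distributed as the matrix-valued
symbol `f : Ω → ℂ^{ρ×ρ}` in the sense of the eigenvalues (Weyl sense). -/
def DistributedEig {Θ : Type*} [MeasureSpace Θ] (Ω : Set Θ)
    {ρ : Type*} [Fintype ρ] [DecidableEq ρ]
    (f : Θ → Matrix ρ ρ ℂ)
    {ι : ℕ → Type} [∀ n, Fintype (ι n)] [∀ n, DecidableEq (ι n)]
    (A : ∀ n, Matrix (ι n) (ι n) ℂ) : Prop :=
  ∀ F : ℂ → ℂ, Continuous F → HasCompactSupport F →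
    Tendsto (fun n => ((Fintype.card (ι n) : ℕ) : ℂ)⁻¹ * eigSum F (A n)) atTop
      (𝓝 (((volume Ω).toReal : ℂ)⁻¹ *
        ∫ θ in Ω, ((Fintype.card ρ : ℕ) : ℂ)⁻¹ * eigSum F (f θ)))

/-- `{A_n}_n ∼_σ α I` (constant symbol `α I_s`, `α = 0` being the notion of a
zero-distributed matrix-sequence): the limit of the singular value averages is `F(α)`. -/
def DistributedSVConst (α : ℝ)
    {ι κ : ℕ → Type} [∀ n, Fintype (ι n)] [∀ n, Fintype (κ n)] [∀ n, DecidableEq (ι n)]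
    (A : ∀ n, Matrix (ι n) (κ n) ℂ) : Prop :=
  ∀ F : ℝ → ℂ, Continuous F → HasCompactSupport F →
    Tendsto
      (fun n => ((min (Fintype.card (ι n)) (Fintype.card (κ n)) : ℕ) : ℂ)⁻¹ * svSum F (A n))
      atTop (𝓝 (F α))

/-- `{A_n}_n ∼_λ α I` (constant symbol `α I_s`, `α` real): the limit of the eigenvalue
averages is `F(α)`. -/
def DistributedEigConst (α : ℝ)
    {ι : ℕ → Type} [∀ n, Fintype (ι n)] [∀ n, DecidableEq (ι n)]
    (A : ∀ n, Matrix (ι n) (ι n) ℂ) : Prop :=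
  ∀ F : ℂ → ℂ, Continuous F → HasCompactSupport F →
    Tendsto (fun n => ((Fintype.card (ι n) : ℕ) : ℂ)⁻¹ * eigSum F (A n)) atTop
      (𝓝 (F (α : ℂ)))

/-- The `k`-th Fourier coefficient (computed entrywise) of a matrix-valued function on
`[-π, π]`: `f̂_k = (1/2π) ∫_{-π}^{π} f(θ) e^{-ικθ} dθ`. -/
def fCoeff {ρ τ : Type*} (f : ℝ → Matrix ρ τ ℂ) (k : ℤ) : Matrix ρ τ ℂ :=
  Matrix.of fun a b =>
    ((2 * π : ℝ) : ℂ)⁻¹ *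
      ∫ θ in (-π : ℝ)..π, f θ a b * Complex.exp (-(Complex.I * (k : ℂ) * (θ : ℂ)))

/-- The (rectangular) block Toeplitz matrix `T_{n,n'}(f) = [f̂_{i-j}]`, of size
`sn × tn'` when `f` is `s × t` matrix-valued. -/
def blockToeplitz {ρ τ : Type*} (f : ℝ → Matrix ρ τ ℂ) (n n' : ℕ) :
    Matrix (Fin n × ρ) (Fin n' × τ) ℂ :=
  Matrix.of fun p q => fCoeff f (((p.1 : ℕ) : ℤ) - ((q.1 : ℕ) : ℤ)) p.2 q.2

/-- The `ν × ν` block matrix with `(i,j)` block the rectangular block Toeplitz matrix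
`T_{n_i,n_j}(f_{i,j})`; the row index `⟨i,(k,a)⟩` consists of the block row `i`, the
Toeplitz row `k` and the intra-block row `a`. -/
def blockMat (ν s t : ℕ) (f : Fin ν → Fin ν → ℝ → Matrix (Fin s) (Fin t) ℂ)
    (ns : Fin ν → ℕ) :
    Matrix ((i : Fin ν) × (Fin (ns i) × Fin s)) ((j : Fin ν) × (Fin (ns j) × Fin t)) ℂ :=
  Matrix.of fun P Q =>
    fCoeff (f P.1 Q.1) (((P.2.1 : ℕ) : ℤ) - ((Q.2.1 : ℕ) : ℤ)) P.2.2 Q.2.2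

/-- Recasting of the column index of a `ν × ν` block matrix along an equality `s = t`,
realizing it as a square matrix. -/
def sigCast (ν s t : ℕ) (ns : Fin ν → ℕ) (hst : s = t) :
    ((j : Fin ν) × (Fin (ns j) × Fin s)) → ((j : Fin ν) × (Fin (ns j) × Fin t)) :=
  fun Q => ⟨Q.1, (Q.2.1, Fin.cast hst Q.2.2)⟩

/-- The `νs × νt` matrix-valued symbol `F = (f_{i,j})_{i,j=1}^ν`. -/
def blockSymbol (ν s t : ℕ) (f : Fin ν → Fin ν → ℝ → Matrix (Fin s) (Fin t) ℂ) :
    ℝ → Matrix (Fin ν × Fin s) (Fin ν × Fin t) ℂ :=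
  fun θ => Matrix.of fun p q => f p.1 q.1 θ p.2 q.2

section part1
lemma sub_ne_of_im {z : ℂ} (hz : z.im ≠ 0) (x : ℝ) : (x : ℂ) - z ≠ 0 := by
  intro h
  have := congrArg Complex.im h
  simp at this
  exact hz this

lemma norm_resolv_le {z : ℂ} (hz : z.im ≠ 0) (x : ℝ) : ‖((x : ℂ) - z)⁻¹‖ ≤ |z.im|⁻¹ := by
  rw [norm_inv]
  apply inv_anti₀ (abs_pos.mpr hz)
  have := Complex.abs_im_le_norm ((x : ℂ) - z)
  simpa using this

/-- The resolvent function on the one point compactification. -/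
def rfun (z : ℂ) (hz : z.im ≠ 0) : C(OnePoint ℝ, ℂ) :=
  OnePoint.continuousMapMk
    ⟨fun x : ℝ => ((x : ℂ) - z)⁻¹,
      (Complex.continuous_ofReal.sub continuous_const).inv₀ (sub_ne_of_im hz)⟩ 0 (by
    rw [coclosedCompact_eq_cocompact]
    apply tendsto_inv₀_cobounded.comp
    rw [← Metric.cobounded_eq_cocompact, ← tendsto_norm_atTop_iff_cobounded]
    have h1 : Tendsto (fun x : ℝ => ‖x‖ - ‖z‖) (Bornology.cobounded ℝ) atTop :=
      tendsto_atTop_add_const_right _ _ tendsto_norm_cobounded_atTop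
    refine tendsto_atTop_mono (fun x => ?_) h1
    have := norm_sub_norm_le (x : ℂ) z
    simpa using this)

lemma rfun_coe (z : ℂ) (hz : z.im ≠ 0) (x : ℝ) : rfun z hz (x : OnePoint ℝ) = ((x : ℂ) - z)⁻¹ := rfl
lemma rfun_infty (z : ℂ) (hz : z.im ≠ 0) : rfun z hz OnePoint.infty = 0 := rfl

def rset : Set C(OnePoint ℝ, ℂ) := {g | g = 1 ∨ ∃ z hz, g = rfun z hz}

def rsub : Submodule ℂ C(OnePoint ℝ, ℂ) := (Submodule.span ℂ rset).topologicalClosure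

lemma rset_sub {g} (h : g ∈ rset) : g ∈ rsub :=
  Submodule.le_topologicalClosure _ (Submodule.subset_span h)

lemma rsub_le {W : Submodule ℂ C(OnePoint ℝ, ℂ)} (hc : IsClosed (W : Set C(OnePoint ℝ, ℂ)))
    (h : rset ⊆ W) : rsub ≤ W :=
  Submodule.topologicalClosure_minimal _ (Submodule.span_le.mpr h) hc

lemma rsub_closed : IsClosed (rsub : Set C(OnePoint ℝ, ℂ)) :=
  Submodule.isClosed_topologicalClosure _

lemma rfun_mul_ne {z w : ℂ} (hz : z.im ≠ 0) (hw : w.im ≠ 0) (h : z ≠ w) :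
    rfun z hz * rfun w hw = (z - w)⁻¹ • (rfun z hz - rfun w hw) := by
  ext x
  induction x using OnePoint.rec with
  | infty => simp [rfun_infty]
  | coe x =>
    have h1 := sub_ne_of_im hz x
    have h2 := sub_ne_of_im hw x
    have h3 : z - w ≠ 0 := sub_ne_zero.mpr h
    simp only [ContinuousMap.mul_apply, rfun_coe, ContinuousMap.smul_apply, ContinuousMap.sub_apply,
      smul_eq_mul]
    field_simp
    ring

lemma rfun_mul_mem_ne {z w : ℂ} (hz : z.im ≠ 0) (hw : w.im ≠ 0) (h : z ≠ w) :
    rfun z hz * rfun w hw ∈ rsub := by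
  rw [rfun_mul_ne hz hw h]
  exact rsub.smul_mem _ (rsub.sub_mem (rset_sub (Or.inr ⟨z, hz, rfl⟩)) (rset_sub (Or.inr ⟨w, hw, rfl⟩)))

lemma shift_im {z : ℂ} (hz : z.im ≠ 0) (k : ℕ) : (z + ((k : ℂ) + 1)⁻¹).im ≠ 0 := by
  have : (((k : ℂ) + 1)⁻¹).im = 0 := by
    have : ((k : ℂ) + 1)⁻¹ = (((k : ℝ) + 1)⁻¹ : ℝ) := by push_cast; rfl
    rw [this, Complex.ofReal_im]
  simpa [this] using hz

lemma rfun_sub_norm {z w : ℂ} (hz : z.im ≠ 0) (hw : w.im ≠ 0) :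
    ‖rfun z hz - rfun w hw‖ ≤ ‖z - w‖ * (|z.im|⁻¹ * |w.im|⁻¹) := by
  rw [ContinuousMap.norm_le _ (by positivity)]
  intro x
  induction x using OnePoint.rec with
  | infty => simp only [ContinuousMap.sub_apply, rfun_infty]; simp; positivity
  | coe x =>
    have h1 := sub_ne_of_im hz x
    have h2 := sub_ne_of_im hw x
    simp only [ContinuousMap.sub_apply, rfun_coe]
    have : ((x:ℂ) - z)⁻¹ - ((x:ℂ) - w)⁻¹ = (z - w) * (((x:ℂ) - z)⁻¹ * ((x:ℂ) - w)⁻¹) := by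
      field_simp; ring
    rw [this, norm_mul, norm_mul]
    gcongr
    · exact norm_resolv_le hz x
    · exact norm_resolv_le hw x

lemma rfun_mul_mem {z w : ℂ} (hz : z.im ≠ 0) (hw : w.im ≠ 0) :
    rfun z hz * rfun w hw ∈ rsub := by
  by_cases h : z = w
  · subst h
    have hlim : Tendsto (fun k : ℕ => rfun z hz * rfun (z + ((k : ℂ) + 1)⁻¹) (shift_im hz k)) atTop
        (𝓝 (rfun z hz * rfun z hz)) := by
      apply Tendsto.mul tendsto_const_nhds
      rw [tendsto_iff_norm_sub_tendsto_zero]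
      have h0 : Tendsto (fun k : ℕ => (1 / ((k : ℝ) + 1)) * (|z.im|⁻¹ * |z.im|⁻¹)) atTop (𝓝 0) := by
        simpa using (tendsto_one_div_add_atTop_nhds_zero_nat (𝕜 := ℝ)).mul_const (|z.im|⁻¹ * |z.im|⁻¹)
      refine squeeze_zero (fun _ => norm_nonneg _) (fun k => ?_) h0
      refine (rfun_sub_norm _ _).trans (le_of_eq ?_)
      have him : (z + ((k : ℂ) + 1)⁻¹).im = z.im := by
        have : ((k : ℂ) + 1)⁻¹ = (((k : ℝ) + 1)⁻¹ : ℝ) := by push_cast; rfl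
        rw [this, Complex.add_im, Complex.ofReal_im, add_zero]
      rw [him]
      congr 1
      have : z + ((k : ℂ) + 1)⁻¹ - z = (((k : ℝ) + 1)⁻¹ : ℝ) := by push_cast; ring
      rw [this, Complex.norm_real, Real.norm_of_nonneg (by positivity), one_div]
    refine rsub_closed.mem_of_tendsto hlim (Eventually.of_forall fun k => rfun_mul_mem_ne _ _ ?_)
    intro h
    have h2 : ((k : ℂ) + 1)⁻¹ = 0 := by simpa using h
    rw [inv_eq_zero] at h2
    exact Nat.cast_add_one_ne_zero k h2
  · exact rfun_mul_mem_ne hz hw h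

lemma rset_mul {a b} (ha : a ∈ rset) (hb : b ∈ rset) : a * b ∈ rsub := by
  rcases ha with rfl | ⟨z, hz, rfl⟩
  · rw [one_mul]; exact rset_sub hb
  · rcases hb with rfl | ⟨w, hw, rfl⟩
    · rw [mul_one]; exact rset_sub (Or.inr ⟨z, hz, rfl⟩)
    · exact rfun_mul_mem hz hw

lemma rset_mul' {a b} (ha : a ∈ rset) (hb : b ∈ rsub) : a * b ∈ rsub := by
  have : rsub ≤ rsub.comap (LinearMap.mulLeft ℂ a) := by
    apply rsub_le
    · exact rsub_closed.preimage (continuous_const.mul continuous_id)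
    · intro c hc; exact rset_mul ha hc
  exact this hb

lemma rsub_mul {a b} (ha : a ∈ rsub) (hb : b ∈ rsub) : a * b ∈ rsub := by
  have : rsub ≤ rsub.comap (LinearMap.mulRight ℂ b) := by
    apply rsub_le
    · exact rsub_closed.preimage (continuous_id.mul continuous_const)
    · intro c hc; exact rset_mul' hc hb
  exact this ha

lemma rset_star {a} (ha : a ∈ rset) : star a ∈ rset := by
  rcases ha with rfl | ⟨z, hz, rfl⟩
  · left; simp
  · right
    refine ⟨starRingEnd ℂ z, by simpa using hz, ?_⟩
    ext x
    induction x using OnePoint.rec with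
    | infty => simp [rfun_infty]
    | coe x => simp [rfun_coe]

lemma rsub_star {a} (ha : a ∈ rsub) : star a ∈ rsub := by
  have hs : ∀ b ∈ Submodule.span ℂ rset, star b ∈ rsub := by
    intro b hb
    induction hb using Submodule.span_induction with
    | mem x hx => exact rset_sub (rset_star hx)
    | zero => rw [star_zero]; exact rsub.zero_mem
    | add x y _ _ hx hy => rw [star_add]; exact rsub.add_mem hx hy
    | smul c x _ hx => rw [star_smul]; exact rsub.smul_mem _ hx
  have hcl : IsClosed {b : C(OnePoint ℝ, ℂ) | star b ∈ rsub} := rsub_closed.preimage continuous_star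
  have : closure (Submodule.span ℂ rset : Set C(OnePoint ℝ, ℂ)) ⊆ {b | star b ∈ rsub} :=
    closure_minimal hs hcl
  exact this ha

def ralg : StarSubalgebra ℂ C(OnePoint ℝ, ℂ) where
  carrier := rsub
  mul_mem' := rsub_mul
  one_mem' := rset_sub (Or.inl rfl)
  add_mem' := rsub.add_mem
  zero_mem' := rsub.zero_mem
  algebraMap_mem' c := by
    rw [Algebra.algebraMap_eq_smul_one]
    exact rsub.smul_mem _ (rset_sub (Or.inl rfl))
  star_mem' := rsub_star

lemma rsub_top (g : C(OnePoint ℝ, ℂ)) : g ∈ rsub := by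
  have hsep : ralg.SeparatesPoints := by
    intro x y hxy
    have hI : (Complex.I).im ≠ 0 := by simp
    refine ⟨_, ⟨rfun Complex.I hI, rset_sub (Or.inr ⟨_, hI, rfl⟩), rfl⟩, ?_⟩
    change rfun Complex.I hI x ≠ rfun Complex.I hI y
    induction x using OnePoint.rec with
    | infty =>
      induction y using OnePoint.rec with
      | infty => exact absurd rfl hxy
      | coe y =>
        rw [rfun_infty, rfun_coe]
        exact (inv_ne_zero (sub_ne_of_im hI y)).symm
    | coe x =>
      induction y using OnePoint.rec with
      | infty =>
        rw [rfun_infty, rfun_coe]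
        exact (inv_ne_zero (sub_ne_of_im hI x))
      | coe y =>
        rw [rfun_coe, rfun_coe]
        intro h
        apply hxy
        have := inv_injective h
        simpa using this
  have h := ContinuousMap.starSubalgebra_topologicalClosure_eq_top_of_separatesPoints ralg hsep
  have hg : g ∈ ralg.topologicalClosure := by rw [h]; trivial
  have : g ∈ closure (rsub : Set C(OnePoint ℝ, ℂ)) := hg
  rwa [rsub_closed.closure_eq] at this

/-- Density of resolvents, packaged as an induction principle. -/
theorem resolvent_induction (P : (ℝ → ℂ) → Prop)
    (h1 : P (fun _ => 1))
    (hadd : ∀ φ ψ, P φ → P ψ → P (fun x => φ x + ψ x))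
    (hsmul : ∀ (c : ℂ) φ, P φ → P (fun x => c * φ x))
    (hres : ∀ z : ℂ, z.im ≠ 0 → P (fun x => ((x : ℂ) - z)⁻¹))
    (hcl : ∀ φ, (∀ ε > 0, ∃ ψ, P ψ ∧ ∀ x, ‖φ x - ψ x‖ ≤ ε) → P φ)
    (φ : ℝ → ℂ) (hφ : Continuous φ) (hc : HasCompactSupport φ) : P φ := by
  let W : Submodule ℂ C(OnePoint ℝ, ℂ) :=
    { carrier := {g | P (fun x : ℝ => g (x : OnePoint ℝ))}
      add_mem' := fun {a b} ha hb => hadd _ _ ha hb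
      zero_mem' := by simpa using hsmul 0 _ h1
      smul_mem' := fun c a ha => hsmul c _ ha }
  have hW : IsClosed (W : Set C(OnePoint ℝ, ℂ)) := by
    rw [← isSeqClosed_iff_isClosed]
    intro u g hu hlim
    apply hcl
    intro ε hε
    rw [Metric.tendsto_atTop] at hlim
    obtain ⟨N, hN⟩ := hlim ε hε
    refine ⟨_, hu N, fun x => ?_⟩
    have h2 := hN N le_rfl
    rw [dist_comm, dist_eq_norm] at h2
    exact ((g - u N).norm_coe_le_norm x).trans h2.le
  have hle : rsub ≤ W := rsub_le hW (by
    rintro g (rfl | ⟨z, hz, rfl⟩)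
    · exact h1
    · exact hres z hz)
  let g : C(OnePoint ℝ, ℂ) := OnePoint.continuousMapMk ⟨φ, hφ⟩ 0 (by
    rw [coclosedCompact_eq_cocompact]
    exact hc.is_zero_at_infty)
  exact hle (rsub_top g)

end part1

section part2
open scoped Matrix.Norms.L2Operator

section mat
variable {ι : Type*} [Fintype ι] [DecidableEq ι]

/-- resolvent -/
def res (A : Matrix ι ι ℂ) (z : ℂ) : Matrix ι ι ℂ := (A - z • (1 : Matrix ι ι ℂ))⁻¹

lemma herm_diag (A : Matrix ι ι ℂ) (hA : A.IsHermitian) :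
    A = (hA.eigenvectorUnitary : Matrix ι ι ℂ) * diagonal (fun i => (hA.eigenvalues i : ℂ)) *
      star (hA.eigenvectorUnitary : Matrix ι ι ℂ) := by
  have := hA.spectral_theorem
  rw [Unitary.conjStarAlgAut_apply] at this
  exact this

lemma eigSum_herm (F : ℂ → ℂ) (A : Matrix ι ι ℂ) (hA : A.IsHermitian) :
    eigSum F A = ∑ i, F (hA.eigenvalues i : ℂ) := by
  unfold eigSum
  rw [hA.roots_charpoly_eq_eigenvalues]
  simp

lemma res_spec (A : Matrix ι ι ℂ) (hA : A.IsHermitian) (z : ℂ) (hz : z.im ≠ 0) :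
    (A - z • (1 : Matrix ι ι ℂ)) * ((hA.eigenvectorUnitary : Matrix ι ι ℂ) *
      diagonal (fun i => ((hA.eigenvalues i : ℂ) - z)⁻¹) *
      star (hA.eigenvectorUnitary : Matrix ι ι ℂ)) = 1 := by
  have hU1 : star (hA.eigenvectorUnitary : Matrix ι ι ℂ) * (hA.eigenvectorUnitary : Matrix ι ι ℂ) = 1 :=
    Unitary.coe_star_mul_self _
  have hU2 : (hA.eigenvectorUnitary : Matrix ι ι ℂ) * star (hA.eigenvectorUnitary : Matrix ι ι ℂ) = 1 :=
    Unitary.coe_mul_star_self _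
  have hd := herm_diag A hA
  generalize (hA.eigenvectorUnitary : Matrix ι ι ℂ) = U at *
  have h2 : A - z • (1 : Matrix ι ι ℂ) = U * diagonal (fun i => (hA.eigenvalues i : ℂ) - z) * star U := by
    have : (diagonal (fun i => (hA.eigenvalues i : ℂ) - z) : Matrix ι ι ℂ) =
        diagonal (fun i => (hA.eigenvalues i : ℂ)) - z • (1 : Matrix ι ι ℂ) := by
      ext i j
      by_cases h : i = j
      · subst h; simp
      · simp [h]
    rw [this, mul_sub, sub_mul, ← hd]
    simp [hU2]
  rw [h2]
  calc U * diagonal (fun i => (hA.eigenvalues i : ℂ) - z) * star U *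
        (U * diagonal (fun i => ((hA.eigenvalues i : ℂ) - z)⁻¹) * star U)
      = U * diagonal (fun i => (hA.eigenvalues i : ℂ) - z) * (star U * U) *
        diagonal (fun i => ((hA.eigenvalues i : ℂ) - z)⁻¹) * star U := by simp only [mul_assoc]
    _ = U * (diagonal (fun i => (hA.eigenvalues i : ℂ) - z) *
        diagonal (fun i => ((hA.eigenvalues i : ℂ) - z)⁻¹)) * star U := by
          rw [hU1, mul_one]; simp only [mul_assoc]
    _ = 1 := by
      rw [diagonal_mul_diagonal]
      have : (fun i => ((hA.eigenvalues i : ℂ) - z) * ((hA.eigenvalues i : ℂ) - z)⁻¹) = fun _ => 1 := by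
        funext i; exact mul_inv_cancel₀ (sub_ne_of_im hz _)
      rw [this, diagonal_one, mul_one, hU2]

lemma res_eq (A : Matrix ι ι ℂ) (hA : A.IsHermitian) (z : ℂ) (hz : z.im ≠ 0) :
    res A z = (hA.eigenvectorUnitary : Matrix ι ι ℂ) *
      diagonal (fun i => ((hA.eigenvalues i : ℂ) - z)⁻¹) *
      star (hA.eigenvectorUnitary : Matrix ι ι ℂ) :=
  Matrix.inv_eq_right_inv (res_spec A hA z hz)

lemma mul_res (A : Matrix ι ι ℂ) (hA : A.IsHermitian) (z : ℂ) (hz : z.im ≠ 0) :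
    (A - z • (1 : Matrix ι ι ℂ)) * res A z = 1 := by
  rw [res_eq A hA z hz]; exact res_spec A hA z hz

lemma res_mul (A : Matrix ι ι ℂ) (hA : A.IsHermitian) (z : ℂ) (hz : z.im ≠ 0) :
    res A z * (A - z • (1 : Matrix ι ι ℂ)) = 1 :=
  mul_eq_one_comm.mp (mul_res A hA z hz)

lemma norm_res_le (A : Matrix ι ι ℂ) (hA : A.IsHermitian) (z : ℂ) (hz : z.im ≠ 0) :
    ‖res A z‖ ≤ |z.im|⁻¹ := by
  rw [res_eq A hA z hz, ← Unitary.coe_star, CStarRing.norm_mul_coe_unitary,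
    CStarRing.norm_coe_unitary_mul, l2_opNorm_diagonal, pi_norm_le_iff_of_nonneg (by positivity)]
  intro i
  exact norm_resolv_le hz _

lemma trace_res (A : Matrix ι ι ℂ) (hA : A.IsHermitian) (z : ℂ) (hz : z.im ≠ 0) :
    (res A z).trace = ∑ i, ((hA.eigenvalues i : ℂ) - z)⁻¹ := by
  rw [res_eq A hA z hz, trace_mul_comm, ← mul_assoc, Unitary.coe_star_mul_self, one_mul,
    trace_diagonal]

lemma res_sub (A B : Matrix ι ι ℂ) (hA : A.IsHermitian) (hB : B.IsHermitian) (z : ℂ) (hz : z.im ≠ 0) :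
    res A z - res B z = res A z * (B - A) * res B z := by
  have h1 := res_mul A hA z hz
  have h2 := mul_res B hB z hz
  have : B - A = (B - z • (1 : Matrix ι ι ℂ)) - (A - z • (1 : Matrix ι ι ℂ)) := by abel
  rw [this, mul_sub, sub_mul, mul_assoc, h2, h1, mul_one, one_mul]

lemma form_bound (X : Matrix ι ι ℂ) (u w : ι → ℂ) :
    ‖∑ p, ∑ q, star (u p) * X p q * w q‖ ≤
      ‖X‖ * (Real.sqrt (∑ p, ‖u p‖ ^ 2) * Real.sqrt (∑ q, ‖w q‖ ^ 2)) := by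
  have h1 : ∑ p, ∑ q, star (u p) * X p q * w q =
      inner ℂ (WithLp.toLp 2 u) (WithLp.toLp 2 (X *ᵥ w)) := by
    rw [EuclideanSpace.inner_eq_star_dotProduct]
    simp only [dotProduct, mulVec, Finset.sum_mul, mul_assoc]
    simp
    refine Finset.sum_congr rfl fun p _ => Finset.sum_congr rfl fun q _ => ?_
    ring
  rw [h1]
  refine (norm_inner_le_norm _ _).trans ?_
  have h2 := l2_opNorm_mulVec X (WithLp.toLp 2 w)
  have h3 : ‖WithLp.toLp 2 u‖ = Real.sqrt (∑ p, ‖u p‖ ^ 2) := EuclideanSpace.norm_eq _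
  have h4 : ‖WithLp.toLp 2 w‖ = Real.sqrt (∑ p, ‖w p‖ ^ 2) := EuclideanSpace.norm_eq _
  rw [h3]
  rw [h4] at h2
  calc _ ≤ Real.sqrt (∑ p, ‖u p‖ ^ 2) * (‖X‖ * Real.sqrt (∑ p, ‖w p‖ ^ 2)) := by gcongr; exact h2
    _ = _ := by ring

lemma entry_bound (X : Matrix ι ι ℂ) (p q : ι) : ‖X p q‖ ≤ ‖X‖ := by
  have := form_bound X (Pi.single p 1) (Pi.single q 1)
  simpa [Pi.single_apply, apply_ite, ite_pow] using this

/-- column vector bound. -/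
lemma row_bound (X : Matrix ι ι ℂ) (u : ι → ℂ) (q : ι) :
    ‖∑ p, u p * X p q‖ ≤ ‖X‖ * Real.sqrt (∑ p, ‖u p‖ ^ 2) := by
  have := form_bound X (star u) (Pi.single q 1)
  simpa [Pi.single_apply, apply_ite, ite_pow] using this

end mat

end part2

section part3
/-- Lebesgue measure on `[-π, π]`. -/
abbrev muI : Measure ℝ := volume.restrict (Set.Icc (-π) π)

lemma muI_eq : muI = volume.restrict (Set.Ioc (-π) π) :=
  (Measure.restrict_congr_set Ioc_ae_eq_Icc).symm

lemma muI_univ : muI.real Set.univ = 2 * π := by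
  simp [muI, Measure.real]
  rw [ENNReal.toReal_ofReal (by positivity)]; ring

/-- scalar Fourier coefficient -/
def gc (g : ℝ → ℂ) (k : ℤ) : ℂ :=
  ((2 * π : ℝ) : ℂ)⁻¹ * ∫ θ, g θ * Complex.exp (-(Complex.I * (k : ℂ) * (θ : ℂ))) ∂muI

/-- scalar trigonometric polynomial -/
def tp (c : ℤ →₀ ℂ) (θ : ℝ) : ℂ := c.sum fun k a => a * Complex.exp (Complex.I * (k : ℂ) * (θ : ℂ))

lemma fourier_two_pi (k : ℤ) (θ : ℝ) [Fact (0 < 2 * π)] :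
    fourier (T := 2 * π) k (θ : AddCircle (2 * π)) = Complex.exp (Complex.I * (k : ℂ) * (θ : ℂ)) := by
  rw [fourier_coe_apply]
  congr 1
  have : (π : ℂ) ≠ 0 := by exact_mod_cast Real.pi_ne_zero
  push_cast
  field_simp

lemma trig_dense (g : ℝ → ℂ) (hg : Integrable g muI) (ε : ℝ) (hε : 0 < ε) :
    ∃ c : ℤ →₀ ℂ, ∫ θ, ‖g θ - tp c θ‖ ∂muI ≤ ε := by
  have hT : Fact (0 < 2 * π) := ⟨by positivity⟩
  have e1 : -π + 2 * π = π := by ring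
  have hg1 : MemLp g 1 (volume.restrict (Set.Ioc (-π) (-π + 2 * π))) := by
    rw [e1, ← muI_eq]; exact memLp_one_iff_integrable.mpr hg
  have hG := hg1.memLp_liftIoc.haarAddCircle
  set G := AddCircle.liftIoc (2 * π) (-π) g with hGdef
  have hd := span_fourierLp_closure_eq_top (T := 2 * π) (p := 1) (by simp)
  have hmem : hG.toLp ∈ closure (Submodule.span ℂ (Set.range (@fourierLp (2 * π) _ 1 _)) : Set _) := by
    have : hG.toLp ∈ (Submodule.span ℂ (Set.range (@fourierLp (2 * π) _ 1 _))).topologicalClosure := by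
      rw [hd]; trivial
    exact this
  have hε' : 0 < ε / (2 * π) := by positivity
  rw [Metric.mem_closure_iff] at hmem
  obtain ⟨x, hx, hdist⟩ := hmem _ hε'
  obtain ⟨c, hc⟩ := Finsupp.mem_span_range_iff_exists_finsupp.mp hx
  refine ⟨c, ?_⟩
  let q : AddCircle (2 * π) → ℂ := fun t => c.sum fun k a => a * fourier k t
  have hxq : (x : AddCircle (2 * π) → ℂ) =ᵐ[AddCircle.haarAddCircle] q := by
    have hx' : x = ContinuousMap.toLp (E := ℂ) 1 AddCircle.haarAddCircle ℂ
        (c.sum fun k a => a • (fourier k : C(AddCircle (2 * π), ℂ))) := by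
      rw [← hc, Finsupp.sum, Finsupp.sum, map_sum]
      simp [fourierLp]
    rw [hx']
    refine (ContinuousMap.coeFn_toLp _ _).trans (Eventually.of_forall fun t => ?_)
    simp [q, Finsupp.sum, ContinuousMap.sum_apply]
  rw [dist_eq_norm, L1.norm_eq_integral_norm] at hdist
  have h2 : ∫ t, ‖G t - q t‖ ∂AddCircle.haarAddCircle < ε / (2 * π) := by
    refine lt_of_eq_of_lt (integral_congr_ae ?_) hdist
    filter_upwards [Lp.coeFn_sub hG.toLp x, hG.coeFn_toLp, hxq] with t h1 h2 h3
    rw [h1, Pi.sub_apply, h2, h3]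
  rw [AddCircle.integral_haarAddCircle] at h2
  rw [← AddCircle.integral_preimage (2 * π) (-π), e1, ← muI_eq, smul_eq_mul] at h2
  have h3 : ∫ θ : ℝ, ‖G (θ : AddCircle (2 * π)) - q θ‖ ∂muI = ∫ θ, ‖g θ - tp c θ‖ ∂muI := by
    rw [muI_eq]
    refine setIntegral_congr_fun measurableSet_Ioc fun θ hθ => ?_
    have hh : G (θ : AddCircle (2 * π)) = g θ := by
      rw [hGdef, AddCircle.liftIoc_coe_apply]; rw [e1]; exact hθ
    have hq : q (θ : AddCircle (2 * π)) = tp c θ := by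
      simp only [q, tp]
      refine Finsupp.sum_congr fun k _ => ?_
      rw [fourier_two_pi]
    simp only [hh, hq]
  rw [h3, inv_mul_lt_iff₀ (by positivity)] at h2
  have : 2 * π * (ε / (2 * π)) = ε := by field_simp
  linarith

lemma gc_eq_fourierCoeffOn (g : ℝ → ℂ) (k : ℤ) :
    gc g k = fourierCoeffOn (a := -π) (b := π) (by linarith [Real.pi_pos]) g k := by
  have hT : Fact (0 < 2 * π) := ⟨by positivity⟩
  rw [fourierCoeffOn_eq_integral, intervalIntegral.integral_of_le (by linarith [Real.pi_pos]), ← muI_eq]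
  unfold gc
  have : π - -π = 2 * π := by ring
  rw [this]
  rw [Complex.real_smul]
  push_cast
  rw [one_div]
  congr 1
  refine integral_congr_ae (Eventually.of_forall fun θ => ?_)
  simp only [smul_eq_mul]
  rw [fourier_two_pi, mul_comm]
  congr 2
  push_cast; ring

lemma bessel (h : ℝ → ℂ) (hm : AEStronglyMeasurable h muI) (C : ℝ) (hC : ∀ θ, ‖h θ‖ ≤ C)
    (S : Finset ℤ) : ∑ k ∈ S, ‖gc h k‖ ^ 2 ≤ C ^ 2 := by
  have hab : -π < π := by linarith [Real.pi_pos]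
  have hL2 : MemLp h 2 (volume.restrict (Set.Ioc (-π) π)) := by
    rw [← muI_eq]
    exact MemLp.of_bound hm C (Eventually.of_forall hC)
  have hs := hasSum_sq_fourierCoeffOn hab hL2
  have h1 := sum_le_hasSum S (fun i _ => sq_nonneg _) hs
  simp_rw [gc_eq_fourierCoeffOn]
  refine h1.trans ?_
  rw [smul_eq_mul, inv_mul_le_iff₀ (by linarith [Real.pi_pos]), intervalIntegral.integral_of_le hab.le,
    ← muI_eq]
  have : ∫ θ, ‖h θ‖ ^ 2 ∂muI ≤ ∫ θ, C ^ 2 ∂muI := by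
    refine integral_mono_of_nonneg (Eventually.of_forall fun _ => by positivity) (integrable_const _)
      (Eventually.of_forall fun θ => ?_)
    exact pow_le_pow_left₀ (norm_nonneg _) (hC θ) 2
  rw [integral_const, muI_univ, smul_eq_mul] at this
  linarith

end part3

section part4
open scoped Matrix.Norms.L2Operator

lemma norm_exp_I (k : ℤ) (θ : ℝ) : ‖Complex.exp (Complex.I * (k : ℂ) * (θ : ℂ))‖ = 1 := by
  have : Complex.I * (k : ℂ) * (θ : ℂ) = ((k * θ : ℝ) : ℂ) * Complex.I := by push_cast; ring
  rw [this, Complex.norm_exp_ofReal_mul_I]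

lemma norm_exp_neg_I (k : ℤ) (θ : ℝ) : ‖Complex.exp (-(Complex.I * (k : ℂ) * (θ : ℂ)))‖ = 1 := by
  rw [Complex.exp_neg, norm_inv, norm_exp_I, inv_one]

lemma int_mul_exp {g : ℝ → ℂ} (hg : Integrable g muI) (k : ℤ) :
    Integrable (fun θ : ℝ => g θ * Complex.exp (-(Complex.I * (k : ℂ) * (θ : ℂ)))) muI := by
  refine hg.mul_bdd (c := 1) (Continuous.aestronglyMeasurable (by fun_prop)) ?_
  exact Eventually.of_forall fun θ => (norm_exp_neg_I k θ).le

lemma gc_sub {g h : ℝ → ℂ} (hg : Integrable g muI) (hh : Integrable h muI) (k : ℤ) :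
    gc (fun θ => g θ - h θ) k = gc g k - gc h k := by
  unfold gc
  rw [← mul_sub, ← integral_sub (int_mul_exp hg k) (int_mul_exp hh k)]
  simp only [sub_mul]

lemma gc_const_mul (c : ℂ) (h : ℝ → ℂ) (k : ℤ) :
    gc (fun θ => c * h θ) k = c * gc h k := by
  unfold gc
  simp only [mul_assoc]
  rw [integral_const_mul]
  ring

lemma gc_sum {ι : Type*} (s : Finset ι) (g : ι → ℝ → ℂ) (hg : ∀ i ∈ s, Integrable (g i) muI) (k : ℤ) :
    gc (fun θ => ∑ i ∈ s, g i θ) k = ∑ i ∈ s, gc (g i) k := by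
  unfold gc
  rw [← Finset.mul_sum, ← integral_finsetSum s fun i hi => int_mul_exp (hg i hi) k]
  simp only [Finset.sum_mul]

lemma gc_exp_mul (j : ℤ) (h : ℝ → ℂ) (k : ℤ) :
    gc (fun θ => Complex.exp (Complex.I * (j : ℂ) * (θ : ℂ)) * h θ) k = gc h (k - j) := by
  unfold gc
  congr 1
  refine integral_congr_ae (Eventually.of_forall fun θ => ?_)
  simp only
  rw [mul_comm (Complex.exp _) (h θ), mul_assoc, ← Complex.exp_add]
  congr 2
  push_cast; ring

lemma gc_one (k : ℤ) : gc (fun _ => 1) k = if k = 0 then 1 else 0 := by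
  have hab : -π < π := by linarith [Real.pi_pos]
  have hpi : ((2 * π : ℝ) : ℂ) ≠ 0 := by exact_mod_cast (by positivity : (2 * π : ℝ) ≠ 0)
  unfold gc
  split_ifs with h
  · subst h
    simp only [Int.cast_zero, mul_zero, zero_mul, neg_zero, Complex.exp_zero, mul_one]
    rw [integral_const, muI_univ, Complex.real_smul, mul_one]
    exact inv_mul_cancel₀ hpi
  · rw [muI_eq, ← intervalIntegral.integral_of_le hab.le]
    have hk : -(Complex.I * (k : ℂ)) ≠ 0 := by simp [h]
    have h1 := integral_exp_mul_complex (a := -π) (b := π) hk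
    have h2 : ∀ θ : ℝ, (1 : ℂ) * Complex.exp (-(Complex.I * (k : ℂ) * (θ : ℂ))) =
        Complex.exp (-(Complex.I * (k : ℂ)) * θ) := fun θ => by rw [one_mul]; congr 1; ring
    simp only [h2]
    rw [h1]
    have h3 : Complex.exp (-(Complex.I * (k : ℂ)) * (π : ℝ)) =
        Complex.exp (-(Complex.I * (k : ℂ)) * ((-π : ℝ) : ℂ)) := by
      rw [Complex.exp_eq_exp_iff_exists_int]
      exact ⟨-k, by push_cast; ring⟩
    rw [h3]; simp

lemma gc_star (g : ℝ → ℂ) (k : ℤ) : star (gc g k) = gc (fun θ => star (g θ)) (-k) := by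
  unfold gc
  rw [star_mul']
  congr 1
  · simp
  · have := integral_conj (μ := muI) (f := fun θ : ℝ => g θ * Complex.exp (-(Complex.I * (k : ℂ) * (θ : ℂ))))
    rw [← starRingEnd_apply, ← this]
    refine integral_congr_ae (Eventually.of_forall fun θ => ?_)
    simp only [map_mul, ← Complex.exp_conj]
    congr 2
    simp

lemma tp_integrable (c : ℤ →₀ ℂ) : Integrable (tp c) muI := by
  have : Continuous (tp c) := by
    unfold tp Finsupp.sum
    fun_prop
  exact this.continuousOn.integrableOn_compact isCompact_Icc

lemma gc_zero_eq (g : ℝ → ℂ) : gc g 0 = ((2 * π : ℝ) : ℂ)⁻¹ * ∫ θ, g θ ∂muI := by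
  simp [gc]

lemma gc_tp_mul (c : ℤ →₀ ℂ) (h : ℝ → ℂ) (hh : Integrable h muI) (k : ℤ) :
    gc (fun θ => tp c θ * h θ) k = c.sum fun j a => a * gc h (k - j) := by
  unfold tp Finsupp.sum
  simp only [Finset.sum_mul]
  rw [gc_sum]
  · refine Finset.sum_congr rfl fun j _ => ?_
    simp only [mul_assoc]
    rw [gc_const_mul]
    congr 1
    rw [← gc_exp_mul]
    simp only [mul_assoc]
  · intro j _
    have h1 : Integrable (fun θ : ℝ => c j * (h θ * Complex.exp (-(Complex.I * ((-j : ℤ) : ℂ) * (θ : ℂ))))) muI :=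
      (int_mul_exp hh (-j)).const_mul (c j)
    convert h1 using 2 with θ
    rw [mul_assoc, mul_comm (Complex.exp _)]
    congr 3
    push_cast; ring

lemma gc_tp (c : ℤ →₀ ℂ) (k : ℤ) : gc (tp c) k = c k := by
  have h := gc_tp_mul c (fun _ => 1) (integrable_const _) k
  simp only [mul_one, gc_one] at h
  change gc (fun θ => tp c θ) k = _
  rw [h]
  unfold Finsupp.sum
  simp only [mul_ite, mul_one, mul_zero]
  have : ∀ j, (k - j = 0) ↔ (k = j) := fun j => sub_eq_zero
  simp only [this]
  rw [Finset.sum_ite_eq]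
  simp only [Finsupp.mem_support_iff, ite_not]
  split_ifs with h <;> simp [h]

section T
variable {L : Type*} [Fintype L] [DecidableEq L]

def gT (G : ℝ → Matrix L L ℂ) (m : L → ℕ) : Matrix ((l : L) × Fin (m l)) ((l : L) × Fin (m l)) ℂ :=
  Matrix.of fun p q => gc (fun θ => G θ p.1 q.1) (((p.2 : ℕ) : ℤ) - ((q.2 : ℕ) : ℤ))

lemma gT_herm (G : ℝ → Matrix L L ℂ) (hG : ∀ θ, (G θ).IsHermitian) (m : L → ℕ) :
    (gT G m).IsHermitian := by
  ext p q
  simp only [conjTranspose_apply, gT, of_apply]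
  rw [gc_star, neg_sub]
  congr 1
  funext θ
  exact (hG θ).apply _ _

lemma gT_sub (G H : ℝ → Matrix L L ℂ) (hG : ∀ a b, Integrable (fun θ => G θ a b) muI)
    (hH : ∀ a b, Integrable (fun θ => H θ a b) muI) (m : L → ℕ) :
    gT G m - gT H m = gT (fun θ => G θ - H θ) m := by
  ext p q
  simp only [gT, of_apply, Matrix.sub_apply]
  rw [gc_sub (hG _ _) (hH _ _)]

lemma theta_bound (D : Matrix L L ℂ) (m : L → ℕ) (N : ℝ) (hN : ∀ l, (m l : ℝ) ≤ N) (θ : ℝ)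
    (X : Matrix ((l : L) × Fin (m l)) ((l : L) × Fin (m l)) ℂ) :
    ‖∑ p : (l : L) × Fin (m l), ∑ q : (l : L) × Fin (m l), X p q * (D q.1 p.1 *
      Complex.exp (-(Complex.I * ((((q.2 : ℕ) : ℤ) - ((p.2 : ℕ) : ℤ) : ℤ) : ℂ) * (θ : ℂ))))‖ ≤
    ‖X‖ * N * ∑ a, ∑ b, ‖D a b‖ := by
  let u : L → ((l : L) × Fin (m l)) → ℂ := fun l p =>
    if p.1 = l then Complex.exp (-(Complex.I * (((p.2 : ℕ) : ℤ) : ℂ) * (θ : ℂ))) else 0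
  have hu : ∀ l, Real.sqrt (∑ p, ‖u l p‖ ^ 2) ≤ Real.sqrt N := by
    intro l
    apply Real.sqrt_le_sqrt
    rw [Fintype.sum_sigma]
    rw [Finset.sum_eq_single l]
    · simp only [u, if_true, norm_exp_neg_I]
      simpa using hN l
    · intro b _ hb
      simp [u, hb]
    · simp
  have key : ∑ p : (l : L) × Fin (m l), ∑ q : (l : L) × Fin (m l), X p q * (D q.1 p.1 *
      Complex.exp (-(Complex.I * ((((q.2 : ℕ) : ℤ) - ((p.2 : ℕ) : ℤ) : ℤ) : ℂ) * (θ : ℂ)))) =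
      ∑ a, ∑ b, D a b * ∑ p, ∑ q, star (u b p) * X p q * u a q := by
    simp only [Finset.mul_sum]
    rw [Finset.sum_comm]
    rw [Finset.sum_comm' (t' := Finset.univ) (s' := fun _ => Finset.univ) (by simp)]
    have h1 : ∀ a b : L, ∑ p, ∑ q, D a b * (star (u b p) * X p q * u a q) =
      ∑ q, ∑ p, D a b * (star (u b p) * X p q * u a q) := fun a b => Finset.sum_comm
    simp only [h1]
    have h2 : ∀ a : L, ∑ b, ∑ q, ∑ p, D a b * (star (u b p) * X p q * u a q) =
      ∑ q, ∑ p, ∑ b, D a b * (star (u b p) * X p q * u a q) := fun a => by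
        rw [Finset.sum_comm]
        exact Finset.sum_congr rfl fun q _ => Finset.sum_comm
    simp only [h2]
    rw [Finset.sum_comm, Finset.sum_comm]
    conv_rhs => rw [Finset.sum_comm]
    rw [Finset.sum_comm]
    refine Finset.sum_congr rfl fun q _ => ?_
    conv_rhs => rw [Finset.sum_comm]
    refine Finset.sum_congr rfl fun p _ => ?_
    rw [Finset.sum_eq_single q.1, Finset.sum_eq_single p.1]
    · have e : star (Complex.exp (-(Complex.I * (((p.2 : ℕ) : ℤ) : ℂ) * (θ : ℂ)))) =
        Complex.exp (Complex.I * (((p.2 : ℕ) : ℤ) : ℂ) * (θ : ℂ)) := by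
        rw [← starRingEnd_apply, ← Complex.exp_conj]
        congr 1
        simp
      simp only [u, if_true, e]
      have e2 : Complex.exp (-(Complex.I * ((((q.2 : ℕ) : ℤ) - ((p.2 : ℕ) : ℤ) : ℤ) : ℂ) * (θ : ℂ))) =
        Complex.exp (Complex.I * (((p.2 : ℕ) : ℤ) : ℂ) * (θ : ℂ)) *
        Complex.exp (-(Complex.I * (((q.2 : ℕ) : ℤ) : ℂ) * (θ : ℂ))) := by
        rw [← Complex.exp_add]; congr 1; push_cast; ring
      rw [e2]; ring
    · intro b _ hb
      simp [u, hb.symm]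
    · simp
    · intro a _ ha
      simp [u, ha.symm]
    · simp
  rw [key]
  refine (norm_sum_le _ _).trans ?_
  rw [Finset.mul_sum]
  refine Finset.sum_le_sum fun a _ => (norm_sum_le _ _).trans ?_
  rw [Finset.mul_sum]
  refine Finset.sum_le_sum fun b _ => ?_
  rw [norm_mul]
  have hN0 : 0 ≤ N := (Nat.cast_nonneg _).trans (hN a)
  have h1 := form_bound X (u b) (u a)
  have h2 : Real.sqrt (∑ p, ‖u b p‖ ^ 2) * Real.sqrt (∑ p, ‖u a p‖ ^ 2) ≤ N := by
    calc _ ≤ Real.sqrt N * Real.sqrt N := mul_le_mul (hu _) (hu _) (Real.sqrt_nonneg _) (Real.sqrt_nonneg _)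
      _ = N := Real.mul_self_sqrt hN0
  calc _ ≤ ‖D a b‖ * (‖X‖ * N) := by
        gcongr
        exact h1.trans (by gcongr)
    _ = _ := by ring

lemma trace_bound (D : ℝ → Matrix L L ℂ) (hD : ∀ a b, Integrable (fun θ => D θ a b) muI)
    (m : L → ℕ) (N : ℝ) (hN : ∀ l, (m l : ℝ) ≤ N)
    (X : Matrix ((l : L) × Fin (m l)) ((l : L) × Fin (m l)) ℂ) :
    ‖(X * gT D m).trace‖ ≤ (2 * π)⁻¹ * (‖X‖ * N * ∑ a, ∑ b, ∫ θ, ‖D θ a b‖ ∂muI) := by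
  have h1 : (X * gT D m).trace = ((2 * π : ℝ) : ℂ)⁻¹ *
      ∫ θ, (∑ p : (l : L) × Fin (m l), ∑ q : (l : L) × Fin (m l), X p q * (D θ q.1 p.1 *
      Complex.exp (-(Complex.I * ((((q.2 : ℕ) : ℤ) - ((p.2 : ℕ) : ℤ) : ℤ) : ℂ) * (θ : ℂ))))) ∂muI := by
    rw [integral_finsetSum]
    · simp only [Matrix.trace, diag_apply, mul_apply]
      rw [Finset.mul_sum]
      refine Finset.sum_congr rfl fun p _ => ?_
      rw [integral_finsetSum]
      · rw [Finset.mul_sum]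
        refine Finset.sum_congr rfl fun q _ => ?_
        rw [integral_const_mul]
        simp only [gT, of_apply, gc]
        ring
      · intro q _
        exact (int_mul_exp (hD _ _) _).const_mul _
    · intro p _
      exact integrable_finsetSum _ fun q _ => (int_mul_exp (hD _ _) _).const_mul _
  rw [h1, norm_mul, norm_inv, Complex.norm_real, Real.norm_of_nonneg (by positivity)]
  gcongr
  refine (norm_integral_le_of_norm_le
    (g := fun θ => ‖X‖ * N * ∑ a, ∑ b, ‖D θ a b‖) ?_ (Eventually.of_forall fun θ => ?_)).trans (le_of_eq ?_)
  · exact (integrable_finsetSum _ fun a _ => integrable_finsetSum _ fun b _ => (hD a b).norm).const_mul _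
  · exact theta_bound (D θ) m N hN θ X
  · rw [integral_const_mul, integral_finsetSum _ fun a _ => integrable_finsetSum _ fun b _ => (hD a b).norm]
    congr 1
    refine Finset.sum_congr rfl fun a _ => ?_
    rw [integral_finsetSum _ fun b _ => (hD a b).norm]

end T

end part4

section part5
open scoped Matrix.Norms.L2Operator

section T
variable {L : Type*} [Fintype L] [DecidableEq L]

lemma aem_det (G : ℝ → Matrix L L ℂ) (hG : ∀ a b, AEMeasurable (fun θ => G θ a b) muI) :
    AEMeasurable (fun θ => (G θ).det) muI := by
  simp only [Matrix.det_apply']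
  refine Finset.aemeasurable_fun_sum _ fun σ _ => ?_
  refine AEMeasurable.const_mul ?_ _
  exact Finset.aemeasurable_fun_prod _ fun i _ => hG _ _

lemma aem_inv (G : ℝ → Matrix L L ℂ) (hG : ∀ a b, AEMeasurable (fun θ => G θ a b) muI) (a b : L) :
    AEMeasurable (fun θ => (G θ)⁻¹ a b) muI := by
  simp only [Matrix.inv_def, Matrix.smul_apply, smul_eq_mul, Ring.inverse_eq_inv']
  refine (aem_det G hG).inv.mul ?_
  simp only [adjugate_apply]
  refine aem_det _ fun i j => ?_
  simp only [updateRow_apply]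
  split_ifs
  · exact aemeasurable_const
  · exact hG _ _

lemma aem_res (G : ℝ → Matrix L L ℂ) (hG : ∀ a b, AEMeasurable (fun θ => G θ a b) muI) (z : ℂ) (a b : L) :
    AEStronglyMeasurable (fun θ => res (G θ) z a b) muI := by
  refine (aem_inv (fun θ => G θ - z • (1 : Matrix L L ℂ)) (fun i j => ?_) a b).aestronglyMeasurable
  simp only [Matrix.sub_apply]
  exact (hG i j).sub aemeasurable_const

lemma int_res (G : ℝ → Matrix L L ℂ) (hG : ∀ a b, AEMeasurable (fun θ => G θ a b) muI)
    (hH : ∀ θ, (G θ).IsHermitian) (z : ℂ) (hz : z.im ≠ 0) (a b : L) :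
    Integrable (fun θ => res (G θ) z a b) muI := by
  refine Integrable.of_bound (aem_res G hG z a b) (|z.im|⁻¹) (Eventually.of_forall fun θ => ?_)
  exact (entry_bound _ _ _).trans (norm_res_le _ (hH θ) z hz)

/-- matrix trig polynomial -/
def mtp (c : L → L → ℤ →₀ ℂ) (θ : ℝ) : Matrix L L ℂ := Matrix.of fun a b => tp (c a b) θ

lemma mtp_int (c : L → L → ℤ →₀ ℂ) (a b : L) : Integrable (fun θ => mtp c θ a b) muI :=
  tp_integrable (c a b)

lemma mtp_res_gc (c : L → L → ℤ →₀ ℂ) (hH : ∀ θ, (mtp c θ).IsHermitian) (z : ℂ) (hz : z.im ≠ 0)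
    (a b : L) (k : ℤ) :
    ∑ l, (c a l).sum (fun j x => x * gc (fun θ => res (mtp c θ) z l b) (k - j)) -
      z * gc (fun θ => res (mtp c θ) z a b) k = if a = b ∧ k = 0 then 1 else 0 := by
  have hi := int_res (mtp c) (fun a b => (mtp_int c a b).aemeasurable) hH z hz
  have hi2 : ∀ l, Integrable (fun θ => tp (c a l) θ * res (mtp c θ) z l b) muI := by
    intro l
    refine (tp_integrable (c a l)).mul_bdd (c := |z.im|⁻¹) (hi l b).aestronglyMeasurable ?_
    exact Eventually.of_forall fun θ => (entry_bound _ _ _).trans (norm_res_le _ (hH θ) z hz)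
  have h1 : ∀ l, (c a l).sum (fun j x => x * gc (fun θ => res (mtp c θ) z l b) (k - j)) =
      gc (fun θ => tp (c a l) θ * res (mtp c θ) z l b) k := fun l =>
    (gc_tp_mul (c a l) _ (hi l b) k).symm
  simp only [h1]
  rw [← gc_sum _ _ fun l _ => hi2 l, ← gc_const_mul, ← gc_sub
    (integrable_finsetSum _ fun l _ => hi2 l) ((hi a b).const_mul z)]
  have h2 : ∀ θ, ∑ l, tp (c a l) θ * res (mtp c θ) z l b - z * res (mtp c θ) z a b =
      (if a = b then 1 else 0) * 1 := by
    intro θ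
    have h3 := congrFun (congrFun (mul_res _ (hH θ) z hz) a) b
    rw [sub_mul, Matrix.sub_apply, Matrix.smul_mul, one_mul, Matrix.smul_apply, smul_eq_mul, mul_apply,
      Matrix.one_apply] at h3
    rw [mul_one, ← h3]
    rfl
  simp only [h2]
  rw [gc_const_mul (if a = b then 1 else 0) (fun _ => 1), gc_one]
  by_cases h : a = b <;> by_cases h' : k = 0 <;> simp [h, h']

lemma gT_mtp (c : L → L → ℤ →₀ ℂ) (m : L → ℕ) (p q : (l : L) × Fin (m l)) :
    gT (mtp c) m p q = c p.1 q.1 (((p.2 : ℕ) : ℤ) - ((q.2 : ℕ) : ℤ)) := by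
  simp only [gT, of_apply]
  exact gc_tp _ _

/-- sum over a window of Toeplitz coefficients equals the full sum -/
lemma window_sum (c : ℤ →₀ ℂ) (d : ℕ) (hc : ∀ j ∈ c.support, |j| ≤ (d : ℤ)) (M k : ℕ) (hk : d ≤ k)
    (hk2 : k + d < M) (φ : ℤ → ℂ) :
    ∑ j : Fin M, c ((k : ℤ) - ((j : ℕ) : ℤ)) * φ ((j : ℕ) : ℤ) = c.sum fun i x => x * φ (k - i) := by
  unfold Finsupp.sum
  symm
  refine Finset.sum_of_injOn (fun i : ℤ => if h : ((k : ℤ) - i).toNat < M then ⟨((k : ℤ) - i).toNat, h⟩ else ⟨0, by omega⟩)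
    ?_ (by simp) ?_ ?_
  · intro i hi i' hi' h
    have h1 := abs_le.mp (hc i hi)
    have h2 := abs_le.mp (hc i' hi')
    dsimp only at h
    rw [dif_pos (by omega), dif_pos (by omega)] at h
    have := congrArg Fin.val h
    simp only at this
    omega
  · intro j _ hj
    have : c ((k : ℤ) - ((j : ℕ) : ℤ)) = 0 := by
      by_contra hne
      apply hj
      refine ⟨(k : ℤ) - ((j : ℕ) : ℤ), Finsupp.mem_support_iff.mpr hne, ?_⟩
      have hjM := j.2
      simp only
      rw [dif_pos (by omega)]
      ext
      simp only
      omega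
    rw [this, zero_mul]
  · intro i hi
    have h1 := abs_le.mp (hc i hi)
    rw [dif_pos (by omega)]
    simp only
    have e : (((((k : ℤ) - i).toNat : ℕ)) : ℤ) = k - i := by omega
    rw [e]
    congr 2
    ring

lemma good_row (c : L → L → ℤ →₀ ℂ) (hH : ∀ θ, (mtp c θ).IsHermitian) (z : ℂ) (hz : z.im ≠ 0)
    (d : ℕ) (hc : ∀ a b, ∀ j ∈ (c a b).support, |j| ≤ (d : ℤ)) (m : L → ℕ) (μ : ℕ) (hμ : ∀ l, μ ≤ m l)
    (p q : (l : L) × Fin (m l)) (h1 : d ≤ (p.2 : ℕ)) (h2 : (p.2 : ℕ) + d < μ) :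
    ((gT (mtp c) m - z • (1 : Matrix ((l : L) × Fin (m l)) ((l : L) × Fin (m l)) ℂ)) * gT (fun θ => res (mtp c θ) z) m) p q =
      (1 : Matrix ((l : L) × Fin (m l)) ((l : L) × Fin (m l)) ℂ) p q := by
  rw [sub_mul, Matrix.sub_apply, Matrix.smul_mul, one_mul, Matrix.smul_apply, smul_eq_mul, mul_apply,
    Fintype.sum_sigma]
  have h3 : ∀ l, ∑ j : Fin (m l), gT (mtp c) m p ⟨l, j⟩ * gT (fun θ => res (mtp c θ) z) m ⟨l, j⟩ q =
      (c p.1 l).sum (fun j x => x * gc (fun θ => res (mtp c θ) z l q.1)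
        (((p.2 : ℕ) : ℤ) - ((q.2 : ℕ) : ℤ) - j)) := by
    intro l
    simp only [gT_mtp]
    have := window_sum (c p.1 l) d (hc _ _) (m l) p.2 h1 (h2.trans_le (hμ l))
      (fun i => gc (fun θ => res (mtp c θ) z l q.1) (i - ((q.2 : ℕ) : ℤ)))
    simp only [gT, of_apply]
    rw [this]
    refine Finsupp.sum_congr fun j _ => ?_
    congr 2
    ring
  simp only [h3]
  have h4 := mtp_res_gc c hH z hz p.1 q.1 (((p.2 : ℕ) : ℤ) - ((q.2 : ℕ) : ℤ))
  have h5 : gT (fun θ => res (mtp c θ) z) m p q =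
    gc (fun θ => res (mtp c θ) z p.1 q.1) (((p.2 : ℕ) : ℤ) - ((q.2 : ℕ) : ℤ)) := rfl
  rw [h5, h4, Matrix.one_apply]
  congr 1
  obtain ⟨a, k⟩ := p
  obtain ⟨b, k'⟩ := q
  simp only [eq_iff_iff]
  constructor
  · rintro ⟨rfl, h⟩
    have : k = k' := by ext; omega
    rw [this]
  · intro h
    cases h
    simp

lemma window_norm (c : ℤ →₀ ℂ) (M k : ℕ) :
    ∑ j : Fin M, ‖c ((k : ℤ) - ((j : ℕ) : ℤ))‖ ≤ c.sum fun _ x => ‖x‖ := by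
  unfold Finsupp.sum
  have hinj : Function.Injective (fun j : Fin M => (k : ℤ) - ((j : ℕ) : ℤ)) := by
    intro i j h
    ext
    simp only at h
    omega
  have h1 : ∑ j : Fin M, ‖c ((k : ℤ) - ((j : ℕ) : ℤ))‖ =
      ∑ i ∈ Finset.univ.image (fun j : Fin M => (k : ℤ) - ((j : ℕ) : ℤ)), ‖c i‖ := by
    rw [Finset.sum_image (fun _ _ _ _ h => hinj h)]
  rw [h1, ← Finset.sum_filter_ne_zero]
  refine Finset.sum_le_sum_of_subset_of_nonneg ?_ fun _ _ _ => norm_nonneg _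
  intro i hi
  simp at hi
  simpa using hi.2

lemma row_sq (H : ℝ → Matrix L L ℂ) (hm : ∀ a b, AEStronglyMeasurable (fun θ => H θ a b) muI)
    (C : ℝ) (hC : ∀ θ a b, ‖H θ a b‖ ≤ C) (m : L → ℕ) (p : (l : L) × Fin (m l)) :
    ∑ q, ‖gT H m p q‖ ^ 2 ≤ Fintype.card L * C ^ 2 := by
  rw [Fintype.sum_sigma, ← nsmul_eq_mul, ← Finset.card_univ]
  refine Finset.sum_le_card_nsmul _ _ _ fun l _ => ?_
  simp only [gT, of_apply]
  have hinj : Function.Injective (fun j : Fin (m l) => ((p.2 : ℕ) : ℤ) - ((j : ℕ) : ℤ)) := by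
    intro i j h
    ext
    simp only at h
    omega
  have h1 := bessel (fun θ => H θ p.1 l) (hm _ _) C (fun θ => hC θ _ _)
    (Finset.univ.image (fun j : Fin (m l) => ((p.2 : ℕ) : ℤ) - ((j : ℕ) : ℤ)))
  rwa [Finset.sum_image (fun _ _ _ _ h => hinj h)] at h1

/-- constant in the bad row estimate -/
def badK (c : L → L → ℤ →₀ ℂ) (z : ℂ) : ℝ :=
  ((∑ a, ∑ b, (c a b).sum fun _ x => ‖x‖) + ‖z‖) *
    (|z.im|⁻¹ * Real.sqrt (Fintype.card L * |z.im|⁻¹ ^ 2)) + |z.im|⁻¹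

lemma badK_nonneg (c : L → L → ℤ →₀ ℂ) (z : ℂ) : 0 ≤ badK c z := by
  have : 0 ≤ ∑ a, ∑ b, (c a b).sum fun _ x => ‖x‖ :=
    Finset.sum_nonneg fun a _ => Finset.sum_nonneg fun b _ => Finset.sum_nonneg fun _ _ => norm_nonneg _
  unfold badK
  positivity

lemma bad_row (c : L → L → ℤ →₀ ℂ) (hH : ∀ θ, (mtp c θ).IsHermitian) (z : ℂ) (hz : z.im ≠ 0)
    (m : L → ℕ) (p : (l : L) × Fin (m l)) :
    ‖(((gT (mtp c) m - z • (1 : Matrix ((l : L) × Fin (m l)) ((l : L) × Fin (m l)) ℂ)) * gT (fun θ => res (mtp c θ) z) m - (1 : Matrix ((l : L) × Fin (m l)) ((l : L) × Fin (m l)) ℂ)) *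
      res (gT (mtp c) m) z) p p‖ ≤ badK c z := by
  have hA := gT_herm (mtp c) hH m
  set R := res (gT (mtp c) m) z with hR
  have hRn : ‖R‖ ≤ |z.im|⁻¹ := norm_res_le _ hA z hz
  set T := gT (fun θ => res (mtp c θ) z) m with hT
  have hTR : ∀ r q, ‖(T * R) r q‖ ≤ |z.im|⁻¹ * Real.sqrt (Fintype.card L * |z.im|⁻¹ ^ 2) := by
    intro r q
    rw [mul_apply]
    refine (row_bound R (T r) q).trans ?_
    gcongr
    refine row_sq _ (aem_res (mtp c) (fun a b => (mtp_int c a b).aemeasurable) z) _ ?_ m r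
    intro θ a b
    exact (entry_bound _ _ _).trans (norm_res_le _ (hH θ) z hz)
  set Q := |z.im|⁻¹ * Real.sqrt (Fintype.card L * |z.im|⁻¹ ^ 2) with hQ
  have hQ0 : 0 ≤ Q := by positivity
  rw [sub_mul, one_mul, Matrix.mul_assoc, Matrix.sub_apply]
  refine (norm_sub_le _ _).trans ?_
  unfold badK
  refine add_le_add ?_ ((entry_bound _ _ _).trans hRn)
  rw [sub_mul, Matrix.smul_mul, one_mul, Matrix.sub_apply, Matrix.smul_apply, mul_apply, add_mul]
  refine (norm_sub_le _ _).trans (add_le_add ?_ ?_)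
  · refine (norm_sum_le _ _).trans ?_
    have : ∀ r, ‖gT (mtp c) m p r * (T * R) r p‖ ≤ ‖gT (mtp c) m p r‖ * Q := by
      intro r
      rw [norm_mul]
      gcongr
      exact hTR _ _
    refine (Finset.sum_le_sum fun r _ => this r).trans ?_
    rw [← Finset.sum_mul]
    gcongr
    rw [Fintype.sum_sigma]
    simp only [gT_mtp]
    calc _ ≤ ∑ b, (c p.1 b).sum fun _ x => ‖x‖ := Finset.sum_le_sum fun b _ => window_norm _ _ _
      _ ≤ _ := by
        refine Finset.single_le_sum (f := fun a => ∑ b, (c a b).sum fun _ x => ‖x‖) ?_ (Finset.mem_univ _)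
        intro a _
        exact Finset.sum_nonneg fun b _ => Finset.sum_nonneg fun _ _ => norm_nonneg _
  · rw [norm_smul]
    gcongr
    exact hTR _ _

lemma bad_count (d μ M : ℕ) (h : μ ≤ M) :
    ((Finset.univ.filter fun k : Fin M => ¬ (d ≤ (k : ℕ) ∧ (k : ℕ) + d < μ)).card : ℝ) ≤ 2 * d + ((M : ℝ) - μ) := by
  have h1 : (Finset.univ.filter fun k : Fin M => ¬ (d ≤ (k : ℕ) ∧ (k : ℕ) + d < μ)).card ≤ d + (M - (μ - d)) := by
    have h2 : ((Finset.univ.filter fun k : Fin M => ¬ (d ≤ (k : ℕ) ∧ (k : ℕ) + d < μ)).image (fun k : Fin M => (k : ℕ))) ⊆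
        Finset.range d ∪ Finset.Ico (μ - d) M := by
      intro x hx
      simp only [Finset.mem_image, Finset.mem_filter, Finset.mem_univ, true_and] at hx
      obtain ⟨k, hk, rfl⟩ := hx
      have := k.2
      simp only [Finset.mem_union, Finset.mem_range, Finset.mem_Ico]
      omega
    have h3 := Finset.card_le_card h2
    rw [Finset.card_image_of_injective _ Fin.val_injective] at h3
    refine h3.trans ((Finset.card_union_le _ _).trans ?_)
    simp
  have h2 : d + (M - (μ - d)) ≤ 2 * d + (M - μ) := by omega
  have h3 : ((M - μ : ℕ) : ℝ) = M - μ := by push_cast [h]; ring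
  rw [← h3]
  exact_mod_cast h1.trans h2

lemma trig_trace (c : L → L → ℤ →₀ ℂ) (hH : ∀ θ, (mtp c θ).IsHermitian) (z : ℂ) (hz : z.im ≠ 0)
    (d : ℕ) (hc : ∀ a b, ∀ j ∈ (c a b).support, |j| ≤ (d : ℤ)) (m : L → ℕ) (μ : ℕ) (hμ : ∀ l, μ ≤ m l) :
    ‖(gT (fun θ => res (mtp c θ) z) m).trace - (res (gT (mtp c) m) z).trace‖ ≤
      badK c z * ∑ l, (2 * (d : ℝ) + ((m l : ℝ) - μ)) := by
  have hA := gT_herm (mtp c) hH m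
  have hm := res_mul _ hA z hz
  have e1 : gT (fun θ => res (mtp c θ) z) m - res (gT (mtp c) m) z = res (gT (mtp c) m) z *
      ((gT (mtp c) m - z • (1 : Matrix ((l : L) × Fin (m l)) ((l : L) × Fin (m l)) ℂ)) * gT (fun θ => res (mtp c θ) z) m - (1 : Matrix ((l : L) × Fin (m l)) ((l : L) × Fin (m l)) ℂ)) := by
    rw [mul_sub, mul_one, ← mul_assoc, hm, one_mul]
  rw [← trace_sub, e1, trace_mul_comm]
  simp only [Matrix.trace, diag_apply]
  refine (norm_sum_le _ _).trans ?_
  rw [Fintype.sum_sigma, Finset.mul_sum]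
  refine Finset.sum_le_sum fun l _ => ?_
  rw [← Finset.sum_filter_add_sum_filter_not Finset.univ
    (fun k : Fin (m l) => ¬ (d ≤ (k : ℕ) ∧ (k : ℕ) + d < μ))]
  have hz0 : ∑ k ∈ Finset.univ.filter (fun k : Fin (m l) => ¬ ¬ (d ≤ (k : ℕ) ∧ (k : ℕ) + d < μ)),
      ‖(((gT (mtp c) m - z • (1 : Matrix ((l : L) × Fin (m l)) ((l : L) × Fin (m l)) ℂ)) * gT (fun θ => res (mtp c θ) z) m - (1 : Matrix ((l : L) × Fin (m l)) ((l : L) × Fin (m l)) ℂ)) *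
      res (gT (mtp c) m) z) ⟨l, k⟩ ⟨l, k⟩‖ = 0 := by
    refine Finset.sum_eq_zero fun k hk => ?_
    simp only [not_not, Finset.mem_filter, Finset.mem_univ, true_and] at hk
    rw [mul_apply, norm_eq_zero]
    refine Finset.sum_eq_zero fun q _ => ?_
    rw [Matrix.sub_apply, good_row c hH z hz d hc m μ hμ ⟨l, k⟩ q hk.1 hk.2, sub_self, zero_mul]
  rw [hz0, add_zero]
  refine (Finset.sum_le_card_nsmul _ _ _ fun k _ => bad_row c hH z hz m ⟨l, k⟩).trans ?_
  rw [nsmul_eq_mul, mul_comm]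
  exact mul_le_mul_of_nonneg_left (bad_count d μ (m l) (hμ l)) (badK_nonneg c z)

end T

end part5

section part6
open scoped Matrix.Norms.L2Operator

lemma tendsto_of_approx (x : ℕ → ℂ) (a : ℂ)
    (h : ∀ ε > 0, ∃ (y : ℕ → ℂ) (b : ℂ), Tendsto y atTop (𝓝 b) ∧ (∀ᶠ n in atTop, ‖x n - y n‖ ≤ ε) ∧ ‖a - b‖ ≤ ε) :
    Tendsto x atTop (𝓝 a) := by
  rw [Metric.tendsto_atTop']
  intro ε hε
  obtain ⟨y, b, hy, hxy, hab⟩ := h (ε / 4) (by positivity)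
  have h1 := (Metric.tendsto_nhds.mp hy) (ε / 4) (by positivity)
  obtain ⟨N, hN⟩ := eventually_atTop.mp (h1.and hxy)
  refine ⟨N, fun n hn => ?_⟩
  obtain ⟨h2, h3⟩ := hN n hn.le
  rw [dist_eq_norm] at h2 ⊢
  have : x n - a = (x n - y n) + (y n - b) - (a - b) := by ring
  rw [this]
  have h4 := norm_sub_le ((x n - y n) + (y n - b)) (a - b)
  have h5 := norm_add_le (x n - y n) (y n - b)
  linarith

section T
variable {L : Type*} [Fintype L] [DecidableEq L]

lemma trace_gT (H : ℝ → Matrix L L ℂ) (m : L → ℕ) :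
    (gT H m).trace = ∑ l, (m l : ℂ) * gc (fun θ => H θ l l) 0 := by
  simp only [Matrix.trace, diag_apply, Fintype.sum_sigma, gT, of_apply, sub_self]
  simp

lemma gap_lim (m : ℕ → L → ℕ) (hM : Tendsto (fun n => ((∑ l, m n l : ℕ) : ℝ)) atTop atTop)
    (hr : ∀ l, Tendsto (fun n => (m n l : ℝ) / ((∑ l, m n l : ℕ) : ℝ)) atTop (𝓝 (1 / (Fintype.card L : ℝ))))
    (K d : ℝ) :
    Tendsto (fun n => ((∑ l, m n l : ℕ) : ℝ)⁻¹ * (K * ∑ l, (2 * d + ∑ l', |(m n l : ℝ) - m n l'|))) atTop (𝓝 0) := by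
  have h1 : ∀ᶠ n in atTop, K * ∑ l, (2 * d * ((∑ l, m n l : ℕ) : ℝ)⁻¹ +
      ∑ l', |(m n l : ℝ) / ((∑ l, m n l : ℕ) : ℝ) - (m n l' : ℝ) / ((∑ l, m n l : ℕ) : ℝ)|) =
      ((∑ l, m n l : ℕ) : ℝ)⁻¹ * (K * ∑ l, (2 * d + ∑ l', |(m n l : ℝ) - m n l'|)) := by
    filter_upwards [hM.eventually_gt_atTop 0] with n hn
    rw [mul_left_comm _ K, Finset.mul_sum (a := ((∑ l, m n l : ℕ) : ℝ)⁻¹)]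
    congr 1
    refine Finset.sum_congr rfl fun l _ => ?_
    rw [mul_add, Finset.mul_sum, mul_comm]
    congr 1
    refine Finset.sum_congr rfl fun l' _ => ?_
    rw [← sub_div, abs_div, abs_of_pos hn]
    ring
  refine Tendsto.congr' h1 ?_
  have h2 : Tendsto (fun n => ((∑ l, m n l : ℕ) : ℝ)⁻¹) atTop (𝓝 0) := tendsto_inv_atTop_zero.comp hM
  have h3 : (0 : ℝ) = K * ∑ l : L, (2 * d * 0 + ∑ l' : L, |1 / (Fintype.card L : ℝ) - 1 / (Fintype.card L : ℝ)|) := by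
    simp
  rw [h3]
  refine Tendsto.const_mul _ (tendsto_finsetSum _ fun l _ => ?_)
  refine (h2.const_mul _).add (tendsto_finsetSum _ fun l' _ => ?_)
  exact ((hr l).sub (hr l')).abs

lemma trig_lim [Nonempty L] (c : L → L → ℤ →₀ ℂ) (hH : ∀ θ, (mtp c θ).IsHermitian) (z : ℂ) (hz : z.im ≠ 0)
    (m : ℕ → L → ℕ) (hM : Tendsto (fun n => ((∑ l, m n l : ℕ) : ℝ)) atTop atTop)
    (hr : ∀ l, Tendsto (fun n => (m n l : ℝ) / ((∑ l, m n l : ℕ) : ℝ)) atTop (𝓝 (1 / (Fintype.card L : ℝ)))) :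
    Tendsto (fun n => ((∑ l, m n l : ℕ) : ℂ)⁻¹ * (res (gT (mtp c) (m n)) z).trace) atTop
      (𝓝 (((2 * π : ℝ) : ℂ)⁻¹ * ∫ θ, (Fintype.card L : ℂ)⁻¹ * (res (mtp c θ) z).trace ∂muI)) := by
  obtain ⟨d, hd⟩ : ∃ d : ℕ, ∀ a b, ∀ j ∈ (c a b).support, |j| ≤ (d : ℤ) := by
    refine ⟨∑ a, ∑ b, ∑ j ∈ (c a b).support, j.natAbs, fun a b j hj => ?_⟩
    rw [Int.abs_eq_natAbs]
    have h1 := Finset.single_le_sum (f := fun j : ℤ => j.natAbs) (fun _ _ => Nat.zero_le _) hj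
    have h2 := Finset.single_le_sum (f := fun b => ∑ j ∈ (c a b).support, j.natAbs) (fun _ _ => Nat.zero_le _)
      (Finset.mem_univ b)
    have h3 := Finset.single_le_sum (f := fun a => ∑ b, ∑ j ∈ (c a b).support, j.natAbs)
      (fun _ _ => Nat.zero_le _) (Finset.mem_univ a)
    exact_mod_cast h1.trans (h2.trans h3)
  have hi := int_res (mtp c) (fun a b => (mtp_int c a b).aemeasurable) hH z hz
  have hA : Tendsto (fun n => ((∑ l, m n l : ℕ) : ℂ)⁻¹ * (gT (fun θ => res (mtp c θ) z) (m n)).trace) atTop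
      (𝓝 (((2 * π : ℝ) : ℂ)⁻¹ * ∫ θ, (Fintype.card L : ℂ)⁻¹ * (res (mtp c θ) z).trace ∂muI)) := by
    have e1 : (((2 * π : ℝ) : ℂ)⁻¹ * ∫ θ, (Fintype.card L : ℂ)⁻¹ * (res (mtp c θ) z).trace ∂muI) =
        ∑ l, ((1 / (Fintype.card L : ℝ) : ℝ) : ℂ) * gc (fun θ => res (mtp c θ) z l l) 0 := by
      simp only [gc_zero_eq, Matrix.trace, diag_apply]
      rw [integral_const_mul, integral_finsetSum _ fun l _ => hi l l, ← Finset.mul_sum, ← Finset.mul_sum]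
      push_cast
      ring
    rw [e1]
    have e2 : ∀ n, ((∑ l, m n l : ℕ) : ℂ)⁻¹ * (gT (fun θ => res (mtp c θ) z) (m n)).trace =
        ∑ l, (((m n l : ℝ) / ((∑ l, m n l : ℕ) : ℝ) : ℝ) : ℂ) * gc (fun θ => res (mtp c θ) z l l) 0 := by
      intro n
      rw [trace_gT, Finset.mul_sum]
      refine Finset.sum_congr rfl fun l _ => ?_
      push_cast
      ring
    simp only [e2]
    refine tendsto_finsetSum _ fun l _ => Tendsto.mul_const _ ?_
    exact (Complex.continuous_ofReal.tendsto _).comp (hr l)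
  have hB : Tendsto (fun n => ((∑ l, m n l : ℕ) : ℂ)⁻¹ * (gT (fun θ => res (mtp c θ) z) (m n)).trace -
      ((∑ l, m n l : ℕ) : ℂ)⁻¹ * (res (gT (mtp c) (m n)) z).trace) atTop (𝓝 0) := by
    refine squeeze_zero_norm (fun n => ?_) (gap_lim m hM hr (badK c z) d)
    rw [← mul_sub, norm_mul, norm_inv, Complex.norm_natCast]
    gcongr
    obtain ⟨l0, hl0⟩ := Finite.exists_min (m n)
    refine (trig_trace c hH z hz d hd (m n) (m n l0) hl0).trans ?_
    have := badK_nonneg c z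
    gcongr with l
    exact (le_abs_self _).trans (Finset.single_le_sum (f := fun l' => |(m n l : ℝ) - m n l'|)
      (fun _ _ => abs_nonneg _) (Finset.mem_univ l0))
  have := hA.sub hB
  simpa using this

/-- conjugate reflection of a finitely supported sequence -/
def cj (c : ℤ →₀ ℂ) : ℤ →₀ ℂ := (c.mapRange (star : ℂ → ℂ) (star_zero ℂ)).equivMapDomain (Equiv.neg ℤ)

lemma tp_cj (c : ℤ →₀ ℂ) (θ : ℝ) : tp (cj c) θ = star (tp c θ) := by
  unfold tp cj
  rw [Finsupp.sum_equivMapDomain, Finsupp.sum_mapRange_index (by simp)]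
  unfold Finsupp.sum
  rw [star_sum]
  refine Finset.sum_congr rfl fun j _ => ?_
  simp only [star_mul', Complex.star_def]
  rw [← Complex.exp_conj]
  congr 2
  simp

lemma tp_add (c c' : ℤ →₀ ℂ) (θ : ℝ) : tp (c + c') θ = tp c θ + tp c' θ := by
  unfold tp
  rw [Finsupp.sum_add_index' (by simp) (by intros; ring)]

lemma tp_smul (x : ℂ) (c : ℤ →₀ ℂ) (θ : ℝ) : tp (x • c) θ = x * tp c θ := by
  unfold tp
  rw [Finsupp.sum_smul_index (by simp)]
  unfold Finsupp.sum
  rw [Finset.mul_sum]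
  simp only [mul_assoc]

lemma approx_herm (G : ℝ → Matrix L L ℂ) (hG : ∀ a b, Integrable (fun θ => G θ a b) muI)
    (hH : ∀ θ, (G θ).IsHermitian) (ε : ℝ) (hε : 0 < ε) :
    ∃ c : L → L → ℤ →₀ ℂ, (∀ θ, (mtp c θ).IsHermitian) ∧
      ∑ a, ∑ b, ∫ θ, ‖(G θ - mtp c θ) a b‖ ∂muI ≤ ε := by
  set δ := ε / ((Fintype.card L : ℝ) * Fintype.card L + 1) with hδ
  have hδ0 : 0 < δ := by positivity
  choose p hp using fun a b => trig_dense (fun θ => G θ a b) (hG a b) δ hδ0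
  refine ⟨fun a b => (1 / 2 : ℂ) • (p a b + cj (p b a)), ?_, ?_⟩
  · intro θ
    ext a b
    simp only [conjTranspose_apply, mtp, of_apply, tp_smul, tp_add, tp_cj, star_mul', star_add, star_star]
    rw [add_comm]
    congr 1
    simp
  · have key : ∀ a b, ∫ θ, ‖(G θ - mtp (fun a b => (1 / 2 : ℂ) • (p a b + cj (p b a))) θ) a b‖ ∂muI ≤ δ := by
      intro a b
      have hi : ∀ a b, Integrable (fun θ => ‖G θ a b - tp (p a b) θ‖) muI := fun a b =>
        ((hG a b).sub (tp_integrable (p a b))).norm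
      calc _ ≤ ∫ θ, (1 / 2 * ‖G θ a b - tp (p a b) θ‖ + 1 / 2 * ‖G θ b a - tp (p b a) θ‖) ∂muI := by
            refine integral_mono_of_nonneg (Eventually.of_forall fun θ => norm_nonneg _)
              (((hi a b).const_mul _).add ((hi b a).const_mul _)) (Eventually.of_forall fun θ => ?_)
            simp only [Matrix.sub_apply, mtp, of_apply, tp_smul, tp_add, tp_cj]
            have e : G θ a b = star (G θ b a) := ((hH θ).apply a b).symm
            have : G θ a b - 1 / 2 * (tp (p a b) θ + star (tp (p b a) θ)) =
                1 / 2 * (G θ a b - tp (p a b) θ) + 1 / 2 * star (G θ b a - tp (p b a) θ) := by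
              rw [star_sub, ← e]; ring
            rw [this]
            refine (norm_add_le _ _).trans ?_
            rw [norm_mul, norm_mul, norm_star]
            norm_num
        _ = 1 / 2 * ∫ θ, ‖G θ a b - tp (p a b) θ‖ ∂muI + 1 / 2 * ∫ θ, ‖G θ b a - tp (p b a) θ‖ ∂muI := by
            rw [integral_add ((hi a b).const_mul _) ((hi b a).const_mul _), integral_const_mul, integral_const_mul]
        _ ≤ δ := by linarith [hp a b, hp b a]
    calc _ ≤ ∑ a : L, ∑ b : L, δ := Finset.sum_le_sum fun a _ => Finset.sum_le_sum fun b _ => key a b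
      _ = (Fintype.card L : ℝ) * Fintype.card L * δ := by simp; ring
      _ ≤ ε := by
        rw [hδ, mul_div_assoc', div_le_iff₀ (by positivity)]
        nlinarith

lemma trace_mul_le (X D : Matrix L L ℂ) (C : ℝ) (hX : ‖X‖ ≤ C) :
    ‖(X * D).trace‖ ≤ C * ∑ a, ∑ b, ‖D a b‖ := by
  simp only [Matrix.trace, diag_apply, mul_apply]
  rw [Finset.sum_comm, Finset.mul_sum]
  refine (norm_sum_le _ _).trans (Finset.sum_le_sum fun a _ => ?_)
  rw [Finset.mul_sum]
  refine (norm_sum_le _ _).trans (Finset.sum_le_sum fun b _ => ?_)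
  rw [norm_mul]
  gcongr
  exact (entry_bound _ _ _).trans hX

lemma res_mul_norm {ι : Type*} [Fintype ι] [DecidableEq ι] (A B : Matrix ι ι ℂ) (hA : A.IsHermitian)
    (hB : B.IsHermitian) (z : ℂ) (hz : z.im ≠ 0) : ‖res A z * res B z‖ ≤ |z.im|⁻¹ * |z.im|⁻¹ := by
  refine (norm_mul_le _ _).trans ?_
  have h1 := norm_res_le A hA z hz
  have h2 := norm_res_le B hB z hz
  gcongr

lemma res_trace_sub {ι : Type*} [Fintype ι] [DecidableEq ι] (A B : Matrix ι ι ℂ) (hA : A.IsHermitian)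
    (hB : B.IsHermitian) (z : ℂ) (hz : z.im ≠ 0) :
    (res A z).trace - (res B z).trace = - (res A z * res B z * (A - B)).trace := by
  rw [← trace_sub, ← neg_sub, trace_neg, res_sub _ _ hB hA z hz, Matrix.mul_assoc, trace_mul_comm,
    Matrix.mul_assoc, trace_mul_comm]

lemma res_lim [Nonempty L] (G : ℝ → Matrix L L ℂ) (hG : ∀ a b, Integrable (fun θ => G θ a b) muI)
    (hH : ∀ θ, (G θ).IsHermitian) (z : ℂ) (hz : z.im ≠ 0)
    (m : ℕ → L → ℕ) (hM : Tendsto (fun n => ((∑ l, m n l : ℕ) : ℝ)) atTop atTop)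
    (hr : ∀ l, Tendsto (fun n => (m n l : ℝ) / ((∑ l, m n l : ℕ) : ℝ)) atTop (𝓝 (1 / (Fintype.card L : ℝ)))) :
    Tendsto (fun n => ((∑ l, m n l : ℕ) : ℂ)⁻¹ * (res (gT G (m n)) z).trace) atTop
      (𝓝 (((2 * π : ℝ) : ℂ)⁻¹ * ∫ θ, (Fintype.card L : ℂ)⁻¹ * (res (G θ) z).trace ∂muI)) := by
  have hz' : 0 < |z.im| := abs_pos.mpr hz
  refine tendsto_of_approx _ _ fun ε hε => ?_
  set δ := ε * |z.im| ^ 2 with hδ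
  have hδ0 : 0 < δ := by positivity
  obtain ⟨c, hc, hce⟩ := approx_herm G hG hH δ hδ0
  refine ⟨_, _, trig_lim c hc z hz m hM hr, ?_, ?_⟩
  · filter_upwards [hM.eventually_gt_atTop 0] with n hn
    have hA := gT_herm G hH (m n)
    have hB := gT_herm _ hc (m n)
    rw [← mul_sub, res_trace_sub _ _ hA hB z hz, gT_sub _ _ hG (mtp_int c), norm_mul, norm_neg, norm_inv,
      Complex.norm_natCast]
    have h1 := trace_bound (fun θ => G θ - mtp c θ) (fun a b => (hG a b).sub (mtp_int c a b)) (m n)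
      ((∑ l, m n l : ℕ) : ℝ) (fun l => by
        exact_mod_cast Finset.single_le_sum (f := m n) (fun _ _ => Nat.zero_le _) (Finset.mem_univ l))
      (res (gT G (m n)) z * res (gT (mtp c) (m n)) z)
    have h2 := res_mul_norm _ _ hA hB z hz
    have hpi : (2 * π)⁻¹ ≤ 1 := inv_le_one_of_one_le₀ (by linarith [Real.pi_gt_three])
    calc _ ≤ ((∑ l, m n l : ℕ) : ℝ)⁻¹ * (1 * ((|z.im|⁻¹ * |z.im|⁻¹) * ((∑ l, m n l : ℕ) : ℝ) * δ)) := by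
          refine mul_le_mul_of_nonneg_left (h1.trans ?_) (by positivity)
          gcongr
      _ = ε := by
          rw [hδ]
          field_simp
  · have hi := int_res G (fun a b => (hG a b).aemeasurable) hH z hz
    have hi2 := int_res (mtp c) (fun a b => (mtp_int c a b).aemeasurable) hc z hz
    have hn : ∀ a b, Integrable (fun θ => ‖(G θ - mtp c θ) a b‖) muI := fun a b =>
      ((hG a b).sub (mtp_int c a b)).norm
    have ht1 : Integrable (fun θ => (res (G θ) z).trace) muI := by
      simp only [Matrix.trace, diag_apply]
      exact integrable_finsetSum _ fun l _ => hi l l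
    have ht2 : Integrable (fun θ => (res (mtp c θ) z).trace) muI := by
      simp only [Matrix.trace, diag_apply]
      exact integrable_finsetSum _ fun l _ => hi2 l l
    have hpi : (2 * π)⁻¹ ≤ 1 := inv_le_one_of_one_le₀ (by linarith [Real.pi_gt_three])
    have hcard : (Fintype.card L : ℝ)⁻¹ ≤ 1 := Nat.cast_inv_le_one _
    rw [← mul_sub, integral_const_mul, integral_const_mul, ← mul_sub, ← integral_sub ht1 ht2, norm_mul, norm_mul,
      norm_inv, norm_inv, Complex.norm_natCast, Complex.norm_real, Real.norm_of_nonneg (by positivity)]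
    have hb : ‖∫ θ, ((res (G θ) z).trace - (res (mtp c θ) z).trace) ∂muI‖ ≤ ε := by
      calc _ ≤ ∫ θ, (|z.im|⁻¹ * |z.im|⁻¹) * ∑ a, ∑ b, ‖(G θ - mtp c θ) a b‖ ∂muI := by
            refine norm_integral_le_of_norm_le (Integrable.const_mul
              (integrable_finsetSum _ fun a _ => integrable_finsetSum _ fun b _ => hn a b) _)
              (Eventually.of_forall fun θ => ?_)
            rw [res_trace_sub _ _ (hH θ) (hc θ) z hz, norm_neg]
            exact trace_mul_le _ _ _ (res_mul_norm _ _ (hH θ) (hc θ) z hz)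
        _ = (|z.im|⁻¹ * |z.im|⁻¹) * ∑ a, ∑ b, ∫ θ, ‖(G θ - mtp c θ) a b‖ ∂muI := by
            rw [integral_const_mul, integral_finsetSum _ fun a _ => integrable_finsetSum _ fun b _ => hn a b]
            congr 1
            exact Finset.sum_congr rfl fun a _ => integral_finsetSum _ fun b _ => hn a b
        _ ≤ (|z.im|⁻¹ * |z.im|⁻¹) * δ := by gcongr
        _ = ε := by rw [hδ]; field_simp
    calc _ ≤ 1 * (1 * ε) := by gcongr
      _ = ε := by ring

/-- eigenvalue sum for a test function on the real line -/
def rS {ι : Type*} [Fintype ι] [DecidableEq ι] (φ : ℝ → ℂ) (A : Matrix ι ι ℂ) : ℂ :=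
  eigSum (fun w => φ w.re) A

lemma rS_herm {ι : Type*} [Fintype ι] [DecidableEq ι] (φ : ℝ → ℂ) (A : Matrix ι ι ℂ) (hA : A.IsHermitian) :
    rS φ A = ∑ i, φ (hA.eigenvalues i) := by
  unfold rS
  rw [eigSum_herm _ A hA]
  simp

lemma rS_sub_le {ι : Type*} [Fintype ι] [DecidableEq ι] (φ ψ : ℝ → ℂ) (A : Matrix ι ι ℂ) (hA : A.IsHermitian)
    (ε : ℝ) (h : ∀ x, ‖φ x - ψ x‖ ≤ ε) : ‖rS φ A - rS ψ A‖ ≤ Fintype.card ι * ε := by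
  rw [rS_herm _ A hA, rS_herm _ A hA, ← Finset.sum_sub_distrib]
  refine (norm_sum_le _ _).trans ?_
  rw [← nsmul_eq_mul]
  exact Finset.sum_le_card_nsmul _ _ _ fun i _ => h _

theorem gen_eig [Nonempty L] (G : ℝ → Matrix L L ℂ) (hG : ∀ a b, Integrable (fun θ => G θ a b) muI)
    (hH : ∀ θ, (G θ).IsHermitian)
    (m : ℕ → L → ℕ) (hM : Tendsto (fun n => ((∑ l, m n l : ℕ) : ℝ)) atTop atTop)
    (hr : ∀ l, Tendsto (fun n => (m n l : ℝ) / ((∑ l, m n l : ℕ) : ℝ)) atTop (𝓝 (1 / (Fintype.card L : ℝ))))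
    (φ : ℝ → ℂ) (hφ : Continuous φ) (hφc : HasCompactSupport φ) :
    Integrable (fun θ => rS φ (G θ)) muI ∧
    Tendsto (fun n => ((∑ l, m n l : ℕ) : ℂ)⁻¹ * rS φ (gT G (m n))) atTop
      (𝓝 (((2 * π : ℝ) : ℂ)⁻¹ * ∫ θ, (Fintype.card L : ℂ)⁻¹ * rS φ (G θ) ∂muI)) := by
  have hA := fun n => gT_herm G hH (m n)
  have hcL : (Fintype.card L : ℂ) ≠ 0 := by exact_mod_cast Fintype.card_ne_zero
  have hpiC : ((2 * π : ℝ) : ℂ) ≠ 0 := by exact_mod_cast (by positivity : (2 * π : ℝ) ≠ 0)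
  have hcard : ∀ n, Fintype.card ((l : L) × Fin (m n l)) = ∑ l, m n l := by
    intro n; simp
  refine resolvent_induction (fun φ => Integrable (fun θ => rS φ (G θ)) muI ∧
    Tendsto (fun n => ((∑ l, m n l : ℕ) : ℂ)⁻¹ * rS φ (gT G (m n))) atTop
      (𝓝 (((2 * π : ℝ) : ℂ)⁻¹ * ∫ θ, (Fintype.card L : ℂ)⁻¹ * rS φ (G θ) ∂muI))) ?_ ?_ ?_ ?_ ?_ φ hφ hφc
  · have e1 : ∀ θ, rS (fun _ => 1) (G θ) = Fintype.card L := by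
      intro θ; rw [rS_herm _ _ (hH θ)]; simp
    have e2 : ∀ n, rS (fun _ => 1) (gT G (m n)) = ((∑ l, m n l : ℕ) : ℂ) := by
      intro n; rw [rS_herm _ _ (hA n), ← hcard n]; simp [-Fintype.card_sigma]
    simp only [e1, e2, inv_mul_cancel₀ hcL]
    refine ⟨integrable_const _, ?_⟩
    have e3 : ((2 * π : ℝ) : ℂ)⁻¹ * ∫ θ : ℝ, (1 : ℂ) ∂muI = 1 := by
      rw [integral_const, muI_univ, Complex.real_smul, mul_one, inv_mul_cancel₀ hpiC]
    rw [e3]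
    refine tendsto_const_nhds.congr' ?_
    filter_upwards [hM.eventually_gt_atTop 0] with n hn
    rw [inv_mul_cancel₀]
    exact_mod_cast hn.ne'
  · rintro φ ψ ⟨h1, h2⟩ ⟨h3, h4⟩
    have e1 : ∀ θ, rS (fun x => φ x + ψ x) (G θ) = rS φ (G θ) + rS ψ (G θ) := by
      intro θ; simp only [rS_herm _ _ (hH θ), Finset.sum_add_distrib]
    have e2 : ∀ n, rS (fun x => φ x + ψ x) (gT G (m n)) = rS φ (gT G (m n)) + rS ψ (gT G (m n)) := by
      intro n; simp only [rS_herm _ _ (hA n), Finset.sum_add_distrib]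
    simp only [e1, e2, mul_add]
    refine ⟨h1.add h3, ?_⟩
    rw [integral_add (h1.const_mul _) (h3.const_mul _), mul_add]
    exact h2.add h4
  · rintro c φ ⟨h1, h2⟩
    have e1 : ∀ θ, rS (fun x => c * φ x) (G θ) = c * rS φ (G θ) := by
      intro θ; simp only [rS_herm _ _ (hH θ), Finset.mul_sum]
    have e2 : ∀ n, rS (fun x => c * φ x) (gT G (m n)) = c * rS φ (gT G (m n)) := by
      intro n; simp only [rS_herm _ _ (hA n), Finset.mul_sum]
    simp only [e1, e2, mul_left_comm _ c, integral_const_mul]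
    refine ⟨h1.const_mul _, ?_⟩
    simp only [integral_const_mul] at h2
    exact h2.const_mul _
  · intro z hz
    have e1 : ∀ θ, rS (fun x => ((x : ℂ) - z)⁻¹) (G θ) = (res (G θ) z).trace := by
      intro θ; rw [rS_herm _ _ (hH θ), trace_res _ (hH θ) z hz]
    have e2 : ∀ n, rS (fun x => ((x : ℂ) - z)⁻¹) (gT G (m n)) = (res (gT G (m n)) z).trace := by
      intro n; rw [rS_herm _ _ (hA n), trace_res _ (hA n) z hz]
    simp only [e1, e2]
    refine ⟨?_, res_lim G hG hH z hz m hM hr⟩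
    simp only [Matrix.trace, diag_apply]
    exact integrable_finsetSum _ fun l _ => int_res G (fun a b => (hG a b).aemeasurable) hH z hz l l
  · intro φ happ
    have hInt0 : Integrable (fun θ => rS φ (G θ)) muI := by
      have hk : ∀ k : ℕ, (0 : ℝ) < 1 / ((k : ℝ) + 1) := fun k => by positivity
      choose ψ hψ hψe using fun k : ℕ => happ _ (hk k)
      have hmeas : AEStronglyMeasurable (fun θ => rS φ (G θ)) muI := by
        refine aestronglyMeasurable_of_tendsto_ae atTop (f := fun k θ => rS (ψ k) (G θ))
          (fun k => (hψ k).1.aestronglyMeasurable) (Eventually.of_forall fun θ => ?_)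
        rw [tendsto_iff_norm_sub_tendsto_zero]
        refine squeeze_zero (fun _ => norm_nonneg _) (fun k => ?_)
          (by simpa using (tendsto_one_div_add_atTop_nhds_zero_nat (𝕜 := ℝ)).const_mul (Fintype.card L : ℝ))
        rw [norm_sub_rev]
        exact rS_sub_le _ _ _ (hH θ) _ (fun x => (hψe k x).trans (one_div _).le)
      have h1 : Integrable (fun θ => rS φ (G θ) - rS (ψ 0) (G θ)) muI := by
        refine Integrable.of_bound (hmeas.sub (hψ 0).1.aestronglyMeasurable) (Fintype.card L * (1 / (((0 : ℕ) : ℝ) + 1)))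
          (Eventually.of_forall fun θ => ?_)
        exact rS_sub_le _ _ _ (hH θ) _ (hψe 0)
      refine (h1.add (hψ 0).1).congr (Eventually.of_forall fun θ => ?_)
      simp
    refine ⟨hInt0, tendsto_of_approx _ _ fun ε hε => ?_⟩
    obtain ⟨ψ, ⟨h1, h2⟩, h3⟩ := happ ε hε
    refine ⟨_, _, h2, ?_, ?_⟩
    · filter_upwards [hM.eventually_gt_atTop 0] with n hn
      rw [← mul_sub, norm_mul, norm_inv, Complex.norm_natCast]
      have h4 := rS_sub_le φ ψ _ (hA n) ε h3
      rw [hcard] at h4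
      rwa [inv_mul_le_iff₀ hn]
    · rw [← mul_sub, ← integral_sub (hInt0.const_mul _) (h1.const_mul _), norm_mul, norm_inv,
        Complex.norm_real, Real.norm_of_nonneg (by positivity), inv_mul_le_iff₀ (by positivity), ← muI_univ, mul_comm]
      refine norm_integral_le_of_norm_le_const (Eventually.of_forall fun θ => ?_)
      rw [← mul_sub, norm_mul, norm_inv, Complex.norm_natCast, inv_mul_le_iff₀ (by exact_mod_cast Fintype.card_pos)]
      exact rS_sub_le φ ψ _ (hH θ) ε h3

end T

end part6

section part7
section SV
variable {ι κ : Type*} [Fintype ι] [Fintype κ] [DecidableEq ι] [DecidableEq κ]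

lemma rS_sq (φ : ℝ → ℂ) (A : Matrix ι ι ℂ) (hA : A.IsHermitian) :
    rS φ (A * A) = rS (fun x => φ (x ^ 2)) A := by
  rw [rS_herm _ A hA]
  have hU1 : star (hA.eigenvectorUnitary : Matrix ι ι ℂ) * (hA.eigenvectorUnitary : Matrix ι ι ℂ) = 1 :=
    Unitary.coe_star_mul_self _
  have hd := herm_diag A hA
  have h1 : (A * A).charpoly = (diagonal (fun i => ((hA.eigenvalues i ^ 2 : ℝ) : ℂ)) : Matrix ι ι ℂ).charpoly := by
    generalize (hA.eigenvectorUnitary : Matrix ι ι ℂ) = U at *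
    set D : Matrix ι ι ℂ := diagonal (fun i => (hA.eigenvalues i : ℂ)) with hD
    have h2 : A * A = U * (D * D * star U) := by
      calc A * A = (U * D * star U) * (U * D * star U) := by rw [← hd]
        _ = U * D * (star U * U) * D * star U := by simp only [mul_assoc]
        _ = _ := by rw [hU1, mul_one]; simp only [mul_assoc]
    rw [h2, charpoly_mul_comm, mul_assoc, hU1, mul_one, hD, diagonal_mul_diagonal]
    congr 2
    funext i
    push_cast
    ring
  unfold rS eigSum
  rw [h1, charpoly_diagonal, Polynomial.roots_prod _ _ (Finset.prod_ne_zero_iff.mpr fun i _ =>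
      Polynomial.X_sub_C_ne_zero _)]
  simp [-Complex.ofReal_pow]

lemma rS_reindex (φ : ℝ → ℂ) (e : ι ≃ κ) (A : Matrix ι ι ℂ) : rS φ (reindex e e A) = rS φ A := by
  unfold rS eigSum
  rw [charpoly_reindex]

lemma rS_blocks (φ : ℝ → ℂ) (A : Matrix ι ι ℂ) (B : Matrix κ κ ℂ) :
    rS φ (fromBlocks A 0 0 B) = rS φ A + rS φ B := by
  unfold rS eigSum
  rw [charpoly_fromBlocks_zero₁₂, Polynomial.roots_mul
    (mul_ne_zero (charpoly_monic A).ne_zero (charpoly_monic B).ne_zero)]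
  simp

lemma rS_comm (φ : ℝ → ℂ) (A : Matrix ι κ ℂ) (B : Matrix κ ι ℂ) :
    (Fintype.card κ : ℂ) * φ 0 + rS φ (A * B) = (Fintype.card ι : ℂ) * φ 0 + rS φ (B * A) := by
  have h := congrArg Polynomial.roots (charpoly_mul_comm' A B)
  rw [Polynomial.roots_mul (mul_ne_zero (pow_ne_zero _ Polynomial.X_ne_zero) (charpoly_monic _).ne_zero),
    Polynomial.roots_mul (mul_ne_zero (pow_ne_zero _ Polynomial.X_ne_zero) (charpoly_monic _).ne_zero)] at h
  have h2 := congrArg (fun s : Multiset ℂ => (s.map fun w => φ w.re).sum) h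
  simpa [rS, eigSum, Multiset.map_nsmul, Multiset.sum_nsmul] using h2

/-- Hermitization -/
def herm (A : Matrix ι κ ℂ) : Matrix (ι ⊕ κ) (ι ⊕ κ) ℂ := fromBlocks 0 A Aᴴ 0

lemma herm_isHermitian (A : Matrix ι κ ℂ) : (herm A).IsHermitian := by
  unfold herm Matrix.IsHermitian
  rw [fromBlocks_conjTranspose]
  simp

lemma svSum_eq (F : ℝ → ℂ) (A : Matrix ι κ ℂ) :
    2 * svSum F A = rS (fun x => F |x|) (herm A) -
      ((Fintype.card ι : ℂ) + Fintype.card κ - 2 * ((min (Fintype.card ι) (Fintype.card κ) : ℕ) : ℂ)) * F 0 := by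
  have h1 : rS (fun x => F |x|) (herm A) = rS (fun x => F (Real.sqrt x)) (herm A * herm A) := by
    rw [rS_sq _ _ (herm_isHermitian A)]
    simp only [Real.sqrt_sq_eq_abs]
  have h2 : herm A * herm A = fromBlocks (A * Aᴴ) 0 0 (Aᴴ * A) := by
    unfold herm
    rw [fromBlocks_multiply]
    simp
  rw [h1, h2, rS_blocks]
  have h3 := rS_comm (fun x => F (Real.sqrt x)) A Aᴴ
  simp only [Real.sqrt_zero] at h3
  have h4 := rS_herm (fun x => F (Real.sqrt x)) _ (isHermitian_mul_conjTranspose_self A)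
  unfold svSum
  rw [← h4, Nat.cast_sub (min_le_left _ _)]
  linear_combination (norm := ring_nf) h3

end SV

lemma fCoeff_eq {ρ τ : Type*} (f : ℝ → Matrix ρ τ ℂ) (k : ℤ) (a : ρ) (b : τ) :
    fCoeff f k a b = gc (fun θ => f θ a b) k := by
  simp only [fCoeff, of_apply, gc]
  rw [intervalIntegral.integral_of_le (by linarith [Real.pi_pos]), muI_eq]

lemma gc_congr (g h : ℝ → ℂ) (hgh : ∀ θ ∈ Set.Icc (-π) π, g θ = h θ) (k : ℤ) : gc g k = gc h k := by
  unfold gc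
  congr 1
  refine setIntegral_congr_fun measurableSet_Icc fun θ hθ => ?_
  simp only [hgh θ hθ]

/-- index rearrangement -/
def eqv (ν s : ℕ) (ns : Fin ν → ℕ) :
    ((i : Fin ν) × (Fin (ns i) × Fin s)) ≃ ((l : Fin ν × Fin s) × Fin (ns l.1)) where
  toFun P := ⟨(P.1, P.2.2), P.2.1⟩
  invFun Q := ⟨Q.1.1, (Q.2, Q.1.2)⟩
  left_inv _ := rfl
  right_inv _ := rfl

/-- index rearrangement, hermitized -/
def eqv2 (ν s t : ℕ) (ns : Fin ν → ℕ) :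
    ((i : Fin ν) × (Fin (ns i) × Fin s)) ⊕ ((i : Fin ν) × (Fin (ns i) × Fin t)) ≃
      ((l : (Fin ν × Fin s) ⊕ (Fin ν × Fin t)) × Fin (Sum.elim (fun l => ns l.1) (fun l => ns l.1) l : ℕ)) where
  toFun P := match P with
    | Sum.inl P => ⟨Sum.inl (P.1, P.2.2), P.2.1⟩
    | Sum.inr P => ⟨Sum.inr (P.1, P.2.2), P.2.1⟩
  invFun Q := match Q with
    | ⟨Sum.inl l, k⟩ => Sum.inl ⟨l.1, (k, l.2)⟩
    | ⟨Sum.inr l, k⟩ => Sum.inr ⟨l.1, (k, l.2)⟩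
  left_inv P := by rcases P with P | P <;> rfl
  right_inv Q := by rcases Q with ⟨l | l, k⟩ <;> rfl

lemma gc_zero_fun (k : ℤ) : gc (fun _ => 0) k = 0 := by simp [gc]

lemma herm_blockMat (ν s t : ℕ) (f : Fin ν → Fin ν → ℝ → Matrix (Fin s) (Fin t) ℂ) (ns : Fin ν → ℕ) :
    reindex (eqv2 ν s t ns) (eqv2 ν s t ns) (herm (blockMat ν s t f ns)) =
      gT (fun θ => herm (blockSymbol ν s t f θ)) (Sum.elim (fun l => ns l.1) (fun l => ns l.1)) := by
  ext ⟨p | p, k⟩ ⟨q | q, k'⟩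
  · exact (gc_zero_fun _).symm
  · exact fCoeff_eq _ _ _ _
  · have h1 : (reindex (eqv2 ν s t ns) (eqv2 ν s t ns) (herm (blockMat ν s t f ns))) ⟨Sum.inr p, k⟩ ⟨Sum.inl q, k'⟩ =
      star (fCoeff (f q.1 p.1) (((k' : ℕ) : ℤ) - ((k : ℕ) : ℤ)) q.2 p.2) := rfl
    rw [h1, fCoeff_eq, gc_star, neg_sub]
    rfl
  · exact (gc_zero_fun _).symm

lemma eig_blockMat (ν s t : ℕ) (f : Fin ν → Fin ν → ℝ → Matrix (Fin s) (Fin t) ℂ) (ns : Fin ν → ℕ) (hst : s = t)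
    (G : ℝ → Matrix (Fin ν × Fin s) (Fin ν × Fin s) ℂ)
    (hG : ∀ θ ∈ Set.Icc (-π) π, G θ = (blockSymbol ν s t f θ).submatrix id (Prod.map id (Fin.cast hst))) :
    reindex (eqv ν s ns) (eqv ν s ns) ((blockMat ν s t f ns).submatrix id (sigCast ν s t ns hst)) =
      gT G (fun l => ns l.1) := by
  ext ⟨p, k⟩ ⟨q, k'⟩
  have h1 : (reindex (eqv ν s ns) (eqv ν s ns) ((blockMat ν s t f ns).submatrix id (sigCast ν s t ns hst)))
      ⟨p, k⟩ ⟨q, k'⟩ = fCoeff (f p.1 q.1) (((k : ℕ) : ℤ) - ((k' : ℕ) : ℤ)) p.2 (Fin.cast hst q.2) := rfl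
  rw [h1, fCoeff_eq]
  simp only [gT, of_apply]
  refine gc_congr _ _ (fun θ hθ => ?_) _
  rw [hG θ hθ]
  rfl

lemma volIcc : (volume (Set.Icc (-π) π)).toReal = 2 * π := by
  rw [Real.volume_Icc, ENNReal.toReal_ofReal (by linarith [Real.pi_pos])]
  ring

lemma sum_fst (ν s : ℕ) (ns : Fin ν → ℕ) : ∑ l : Fin ν × Fin s, ns l.1 = (∑ i, ns i) * s := by
  rw [Fintype.sum_prod_type, Finset.sum_mul]
  simp [mul_comm]

lemma size_lim (N : ℕ → ℕ) (hN : Tendsto N atTop atTop) (s : ℕ) (hs : 0 < s) :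
    Tendsto (fun n => ((N n * s : ℕ) : ℝ)) atTop atTop := by
  refine tendsto_natCast_atTop_atTop.comp ?_
  exact tendsto_atTop_mono (fun n => Nat.le_mul_of_pos_right _ hs) hN

lemma ratio_lim (ν s : ℕ) (a N : ℕ → ℕ)
    (h : Tendsto (fun n => (a n : ℝ) / (N n : ℝ)) atTop (𝓝 (1 / (ν : ℝ)))) :
    Tendsto (fun n => (a n : ℝ) / ((N n * s : ℕ) : ℝ)) atTop (𝓝 (1 / ((ν * s : ℕ) : ℝ))) := by
  have := h.mul_const ((s : ℝ)⁻¹)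
  convert this using 2
  · push_cast; rw [div_mul_eq_div_div]; rfl
  · push_cast; rw [div_mul_eq_div_div]; rfl

lemma muI_int {g : ℝ → ℂ} (h : IntervalIntegrable g volume (-π) π) : Integrable g muI := by
  rw [muI_eq]
  exact (intervalIntegrable_iff_integrableOn_Ioc_of_le (by linarith [Real.pi_pos])).mp h

theorem eig_part
    (ν s t : ℕ) (hν : 2 ≤ ν) (hs : 0 < s)
    (f : Fin ν → Fin ν → ℝ → Matrix (Fin s) (Fin t) ℂ)
    (hf : ∀ i j a b, IntervalIntegrable (fun θ => f i j θ a b) volume (-π) π)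
    (nsz : ℕ → Fin ν → ℕ)
    (htot : Tendsto (fun n => ∑ i, nsz n i) atTop atTop)
    (hratio : ∀ j, Tendsto (fun n => (nsz n j : ℝ) / ((∑ i, nsz n i : ℕ) : ℝ))
      atTop (𝓝 (1 / (ν : ℝ)))) (hst : s = t)
    (hherm : ∀ θ ∈ Set.Icc (-π) π,
        ((blockSymbol ν s t f θ).submatrix id
          (Prod.map id (Fin.cast hst))).IsHermitian) :
      DistributedEig (Set.Icc (-π) π)
        (fun θ => (blockSymbol ν s t f θ).submatrix id (Prod.map id (Fin.cast hst)))
        (fun n => (blockMat ν s t f (nsz n)).submatrix id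
          (sigCast ν s t (nsz n) hst)) := by
  classical
  intro F hF hFc
  have hne : Nonempty (Fin ν × Fin s) := ⟨(⟨0, by omega⟩, ⟨0, hs⟩)⟩
  set B : ℝ → Matrix (Fin ν × Fin s) (Fin ν × Fin s) ℂ :=
    fun θ => (blockSymbol ν s t f θ).submatrix id (Prod.map id (Fin.cast hst)) with hB
  set G : ℝ → Matrix (Fin ν × Fin s) (Fin ν × Fin s) ℂ :=
    fun θ => if θ ∈ Set.Icc (-π) π then B θ else 0 with hGdef
  have hGB : ∀ θ ∈ Set.Icc (-π) π, G θ = B θ := fun θ hθ => if_pos hθ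
  have hGH : ∀ θ, (G θ).IsHermitian := by
    intro θ
    by_cases h : θ ∈ Set.Icc (-π) π
    · rw [hGB θ h]; exact hherm θ h
    · simp only [hGdef, if_neg h]; exact isHermitian_zero
  have hGi : ∀ a b, Integrable (fun θ => G θ a b) muI := by
    intro a b
    refine (muI_int (hf a.1 b.1 a.2 (Fin.cast hst b.2))).congr ?_
    filter_upwards [ae_restrict_mem measurableSet_Icc] with θ hθ
    rw [hGB θ hθ]
    rfl
  have h1 := (gen_eig G hGi hGH (fun n l => nsz n l.1)
    (by simp only [sum_fst]; exact size_lim _ htot s hs)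
    (fun l => by
      simp only [sum_fst, Fintype.card_prod, Fintype.card_fin]
      exact ratio_lim ν s _ _ (hratio l.1))
    (fun x => F x) (hF.comp Complex.continuous_ofReal)
    (hFc.comp_isClosedEmbedding Complex.isometry_ofReal.isClosedEmbedding)).2
  have hcard : ∀ n, Fintype.card ((i : Fin ν) × (Fin (nsz n i) × Fin s)) = ∑ l : Fin ν × Fin s, nsz n l.1 := by
    intro n
    rw [Fintype.card_congr (eqv ν s (nsz n))]
    simp
  have hrS : ∀ {ι : Type} [Fintype ι] [DecidableEq ι] (A : Matrix ι ι ℂ), A.IsHermitian →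
      eigSum F A = rS (fun x => F x) A := by
    intro ι _ _ A hA
    rw [eigSum_herm _ A hA, rS_herm _ A hA]
  have e1 : ∀ n, eigSum F ((blockMat ν s t f (nsz n)).submatrix id (sigCast ν s t (nsz n) hst)) =
      rS (fun x => F x) (gT G (fun l => nsz n l.1)) := by
    intro n
    rw [← hrS _ (gT_herm G hGH _), ← eig_blockMat ν s t f (nsz n) hst G hGB]
    unfold eigSum
    rw [charpoly_reindex]
  have e2 : ∫ θ in Set.Icc (-π) π, ((Fintype.card (Fin ν × Fin s) : ℕ) : ℂ)⁻¹ * eigSum F (B θ) =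
      ∫ θ, (Fintype.card (Fin ν × Fin s) : ℂ)⁻¹ * rS (fun x => F x) (G θ) ∂muI := by
    refine setIntegral_congr_fun measurableSet_Icc fun θ hθ => ?_
    rw [← hrS _ (hGH θ), hGB θ hθ]
  rw [volIcc, e2]
  simp only [hcard, e1]
  exact h1

theorem sv_part
    (ν s t : ℕ) (hν : 2 ≤ ν) (hs : 0 < s) (ht : 0 < t)
    (f : Fin ν → Fin ν → ℝ → Matrix (Fin s) (Fin t) ℂ)
    (hf : ∀ i j a b, IntervalIntegrable (fun θ => f i j θ a b) volume (-π) π)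
    (nsz : ℕ → Fin ν → ℕ)
    (htot : Tendsto (fun n => ∑ i, nsz n i) atTop atTop)
    (hratio : ∀ j, Tendsto (fun n => (nsz n j : ℝ) / ((∑ i, nsz n i : ℕ) : ℝ))
      atTop (𝓝 (1 / (ν : ℝ)))) :
    DistributedSV (Set.Icc (-π) π) (blockSymbol ν s t f)
      (fun n => blockMat ν s t f (nsz n)) := by
  intro F hF hFc
  have hne : Nonempty ((Fin ν × Fin s) ⊕ (Fin ν × Fin t)) := ⟨Sum.inl (⟨0, by omega⟩, ⟨0, hs⟩)⟩
  set G : ℝ → Matrix ((Fin ν × Fin s) ⊕ (Fin ν × Fin t)) ((Fin ν × Fin s) ⊕ (Fin ν × Fin t)) ℂ :=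
    fun θ => herm (blockSymbol ν s t f θ) with hGdef
  have hGH : ∀ θ, (G θ).IsHermitian := fun θ => herm_isHermitian _
  have hGi : ∀ a b, Integrable (fun θ => G θ a b) muI := by
    rintro (a | a) (b | b)
    · exact integrable_zero _ _ _
    · exact muI_int (hf a.1 b.1 a.2 b.2)
    · have := muI_int (hf b.1 a.1 b.2 a.2)
      exact (LinearIsometryEquiv.integrable_comp_iff Complex.conjLIE).mpr this
    · exact integrable_zero _ _ _
  set m : ℕ → (Fin ν × Fin s) ⊕ (Fin ν × Fin t) → ℕ :=
    fun n => Sum.elim (fun l => nsz n l.1) (fun l => nsz n l.1) with hm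
  set N : ℕ → ℕ := fun n => ∑ i, nsz n i with hN
  have hmsum : ∀ n, ∑ l, m n l = N n * (s + t) := by
    intro n
    simp only [hm, Fintype.sum_sum_type, Sum.elim_inl, Sum.elim_inr, sum_fst, hN]
    ring
  have hcL : Fintype.card ((Fin ν × Fin s) ⊕ (Fin ν × Fin t)) = ν * (s + t) := by
    simp; ring
  obtain ⟨hInt0, hlim⟩ := gen_eig G hGi hGH m
    (by simp only [hmsum]; exact size_lim _ htot (s + t) (by omega))
    (fun l => by
      simp only [hmsum, hcL]
      rcases l with l | l
      · exact ratio_lim ν (s + t) _ _ (hratio l.1)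
      · exact ratio_lim ν (s + t) _ _ (hratio l.1))
    (fun x => F |x|) (hF.comp continuous_abs)
    (by
      obtain ⟨R, hR⟩ := hFc.isCompact.isBounded.subset_closedBall 0
      refine HasCompactSupport.intro (isCompact_closedBall (0 : ℝ) R) fun x hx => ?_
      apply image_eq_zero_of_notMem_tsupport
      intro h
      apply hx
      have := hR h
      simpa using this)
  have hcr : ∀ n, Fintype.card ((i : Fin ν) × (Fin (nsz n i) × Fin s)) = N n * s := by
    intro n; simp [hN, Finset.sum_mul]
  have hcc : ∀ n, Fintype.card ((i : Fin ν) × (Fin (nsz n i) × Fin t)) = N n * t := by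
    intro n; simp [hN, Finset.sum_mul]
  set r := min s t with hr
  have hr0 : 0 < r := lt_min hs ht
  have hrC : (r : ℂ) ≠ 0 := by exact_mod_cast hr0.ne'
  have hstC : (s : ℂ) + t ≠ 0 := by exact_mod_cast (by omega : s + t ≠ 0)
  have hνC : (ν : ℂ) ≠ 0 := by exact_mod_cast (by omega : ν ≠ 0)
  have hpiC : ((2 * π : ℝ) : ℂ) ≠ 0 := by exact_mod_cast (by positivity : (2 * π : ℝ) ≠ 0)
  have e1 : ∀ n, svSum F (blockMat ν s t f (nsz n)) =
      1 / 2 * (rS (fun x => F |x|) (gT G (m n)) - N n * ((s : ℂ) + t - 2 * r) * F 0) := by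
    intro n
    have h := svSum_eq F (blockMat ν s t f (nsz n))
    rw [← rS_reindex _ (eqv2 ν s t (nsz n)), herm_blockMat, hcr, hcc, Nat.mul_min_mul_left] at h
    push_cast at h
    rw [← hr] at h
    linear_combination (1 / 2) * h
  have e2 : ∀ θ, svSum F (blockSymbol ν s t f θ) =
      1 / 2 * (rS (fun x => F |x|) (G θ) - ν * ((s : ℂ) + t - 2 * r) * F 0) := by
    intro θ
    have h := svSum_eq F (blockSymbol ν s t f θ)
    simp only [Fintype.card_prod, Fintype.card_fin, Nat.mul_min_mul_left] at h
    rw [← hr] at h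
    push_cast at h
    linear_combination (1 / 2) * h
  rw [volIcc]
  simp only [hcr, hcc, Nat.mul_min_mul_left, Fintype.card_prod, Fintype.card_fin, e1, e2, ← hr]
  have hl2 := (hlim.const_mul (((s : ℂ) + t) / (2 * r))).sub_const (((s : ℂ) + t - 2 * r) / (2 * r) * F 0)
  have e3 : ((2 * π : ℝ) : ℂ)⁻¹ * ∫ θ in Set.Icc (-π) π, ((ν * r : ℕ) : ℂ)⁻¹ *
      (1 / 2 * (rS (fun x => F |x|) (G θ) - ν * ((s : ℂ) + t - 2 * r) * F 0)) =
      ((s : ℂ) + t) / (2 * r) * (((2 * π : ℝ) : ℂ)⁻¹ *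
        ∫ θ, (Fintype.card ((Fin ν × Fin s) ⊕ (Fin ν × Fin t)) : ℂ)⁻¹ * rS (fun x => F |x|) (G θ) ∂muI) -
      ((s : ℂ) + t - 2 * r) / (2 * r) * F 0 := by
    rw [integral_const_mul, integral_const_mul, integral_sub hInt0 (integrable_const _), integral_const,
      integral_const_mul, muI_univ, Complex.real_smul, hcL]
    push_cast at hpiC ⊢
    field_simp
    try ring
  rw [e3]
  refine hl2.congr' ?_
  filter_upwards [htot.eventually_gt_atTop 0] with n hn
  have hNC : (N n : ℂ) ≠ 0 := by exact_mod_cast hn.ne'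
  rw [hmsum]
  push_cast
  field_simp
  try ring

end part7

/-- almost equal block sizes: if `n_j/n → 1/ν` for all `j` (i.e.
`n_j = n/ν + o(n)`) with `n = n_1 + ⋯ + n_ν → ∞`, then `{A_n}_n ∼_σ F` with
`F = (f_{i,j})_{i,j=1}^ν`, and `{A_n}_n ∼_λ F` when `F` is Hermitian-valued. -/
theorem almost_equal_blocks_basic
    (ν s t : ℕ) (hν : 2 ≤ ν) (hs : 0 < s) (ht : 0 < t)
    (f : Fin ν → Fin ν → ℝ → Matrix (Fin s) (Fin t) ℂ)
    (hf : ∀ i j a b, IntervalIntegrable (fun θ => f i j θ a b) volume (-π) π)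
    (nsz : ℕ → Fin ν → ℕ)
    (htot : Tendsto (fun n => ∑ i, nsz n i) atTop atTop)
    (hratio : ∀ j, Tendsto (fun n => (nsz n j : ℝ) / ((∑ i, nsz n i : ℕ) : ℝ))
      atTop (𝓝 (1 / (ν : ℝ)))) :
    DistributedSV (Set.Icc (-π) π) (blockSymbol ν s t f)
      (fun n => blockMat ν s t f (nsz n)) ∧
    (∀ hst : s = t,
      (∀ θ ∈ Set.Icc (-π) π,
        ((blockSymbol ν s t f θ).submatrix id
          (Prod.map id (Fin.cast hst))).IsHermitian) →
      DistributedEig (Set.Icc (-π) π)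
        (fun θ => (blockSymbol ν s t f θ).submatrix id (Prod.map id (Fin.cast hst)))
        (fun n => (blockMat ν s t f (nsz n)).submatrix id
          (sigCast ν s t (nsz n) hst))) := by
  exact ⟨sv_part ν s t hν hs ht f hf nsz htot hratio,
    fun hst hherm => eig_part ν s t hν hs f hf nsz htot hratio hst hherm⟩

end
end

section
/- Fix ν ≥ 2, positive integers s,t, and f_{i,j} ∈ L¹([-π,π]; ℂ^{s×t}) for i,j = 1,…,ν. Let A_n be the ν×ν block matrix with (i,j) block T_{n_i,n_j}(f_{i,j}), where n = n_1+⋯+n_ν and n_i/n → c_i ∈ (0,1) with c_1+⋯+c_ν = 1. Let Ã_n be obtained from A_n by replacing each off-diagonal block T_{n_i,n_j}(f_{i,j}) (i ≠ j) by T̃_{n_i,n_j}: if n_i ≥ n_j, T̃_{n_i,n_j} = [T_{n_j}(f_{i,j}); O_{s(n_i−n_j)×tn_j}] (square Toeplitz part on top, zero rows below); if n_j > n_i, T̃_{n_i,n_j} = [T_{n_i}(f_{i,j}) | O_{sn_i×t(n_j−n_i)}] (square Toeplitz part on the left, zero columns on the right). Then for any measurable G: {A_n}_n ∼_σ G if and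 only if {Ã_n}_n ∼_σ G; and if in addition all A_n and Ã_n are Hermitian, {A_n}_n ∼_λ G if and only if {Ã_n}_n ∼_λ G. -/
open MeasureTheory Filter Topology Matrix
open scoped Real

noncomputable section

/-- The modified block matrix `Ã_n`: each block `T_{n_i,n_j}(f_{i,j})` is replaced by
its square leading Toeplitz part `T_{min(n_i,n_j)}(f_{i,j})` padded with zero rows
(if `n_i ≥ n_j`) or zero columns (if `n_j > n_i`); the diagonal blocks are unchanged. -/
def blockMatTilde (ν s t : ℕ) (f : Fin ν → Fin ν → ℝ → Matrix (Fin s) (Fin t) ℂ)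
    (ns : Fin ν → ℕ) :
    Matrix ((i : Fin ν) × (Fin (ns i) × Fin s)) ((j : Fin ν) × (Fin (ns j) × Fin t)) ℂ :=
  Matrix.of fun P Q =>
    if (P.2.1 : ℕ) < min (ns P.1) (ns Q.1) ∧ (Q.2.1 : ℕ) < min (ns P.1) (ns Q.1) then
      fCoeff (f P.1 Q.1) (((P.2.1 : ℕ) : ℤ) - ((Q.2.1 : ℕ) : ℤ)) P.2.2 Q.2.2
    else 0

section Helpers

set_option linter.unusedSectionVars false

open scoped Matrix.Norms.L2Operator

/-- Dual formulation of a trace-norm bound. -/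
def TB {m n : Type*} [Fintype m] [Fintype n] [DecidableEq m]
    (M : Matrix m n ℂ) (c : ℝ) : Prop :=
  ∀ X : Matrix n m ℂ, ‖(X * M).trace‖ ≤ c * ‖X‖

section TBsec
variable {m n p : Type*} [Fintype m] [Fintype n] [Fintype p]
  [DecidableEq m] [DecidableEq n] [DecidableEq p]

lemma TB.mono {M : Matrix m n ℂ} {c d : ℝ} (h : TB M c) (hcd : c ≤ d) : TB M d := fun X =>
  (h X).trans (mul_le_mul_of_nonneg_right hcd (norm_nonneg _))

lemma TB.zero : TB (0 : Matrix m n ℂ) 0 := fun X => by simp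

lemma TB.add {M M' : Matrix m n ℂ} {c d : ℝ} (h : TB M c) (h' : TB M' d) :
    TB (M + M') (c + d) := fun X => by
  rw [Matrix.mul_add, Matrix.trace_add, add_mul]
  exact (norm_add_le _ _).trans (add_le_add (h X) (h' X))

lemma TB.smul {M : Matrix m n ℂ} {c : ℝ} (h : TB M c) (a : ℂ) :
    TB (a • M) (‖a‖ * c) := fun X => by
  rw [Matrix.mul_smul, Matrix.trace_smul, norm_smul, mul_assoc]
  exact mul_le_mul_of_nonneg_left (h X) (norm_nonneg _)

lemma TB.neg {M : Matrix m n ℂ} {c : ℝ} (h : TB M c) : TB (-M) c := fun X => by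
  rw [Matrix.mul_neg, Matrix.trace_neg, norm_neg]; exact h X

lemma TB.mul_left {M : Matrix m n ℂ} {c : ℝ} (hc : 0 ≤ c) (h : TB M c) (Y : Matrix p m ℂ)
    (hY : ‖Y‖ ≤ 1) : TB (Y * M) c := fun X => by
  rw [← Matrix.mul_assoc]
  refine (h _).trans (mul_le_mul_of_nonneg_left ?_ hc)
  refine (Matrix.l2_opNorm_mul _ _).trans ?_
  exact mul_le_of_le_one_right (norm_nonneg _) hY

lemma TB.mul_right {M : Matrix m n ℂ} {c : ℝ} (hc : 0 ≤ c) (h : TB M c) (Y : Matrix n p ℂ)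
    (hY : ‖Y‖ ≤ 1) : TB (M * Y) c := fun X => by
  rw [← Matrix.mul_assoc, Matrix.trace_mul_comm, ← Matrix.mul_assoc]
  refine (h _).trans (mul_le_mul_of_nonneg_left ?_ hc)
  refine (Matrix.l2_opNorm_mul _ _).trans ?_
  exact mul_le_of_le_one_left (norm_nonneg _) hY

lemma TB.conjTranspose {M : Matrix m n ℂ} {c : ℝ} (h : TB M c) : TB Mᴴ c := fun X => by
  have := h Xᴴ
  rw [Matrix.l2_opNorm_conjTranspose, Matrix.trace_mul_comm] at this
  rw [← norm_star, ← Matrix.trace_conjTranspose, Matrix.conjTranspose_mul,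
    Matrix.conjTranspose_conjTranspose]
  exact this

lemma entry_le (X : Matrix m n ℂ) (i : m) (j : n) : ‖X i j‖ ≤ ‖X‖ := by
  have h := Matrix.l2_opNorm_mulVec X (EuclideanSpace.single j 1)
  rw [PiLp.norm_single, norm_one, mul_one] at h
  refine le_trans ?_ h
  refine le_trans ?_ (PiLp.norm_apply_le _ i)
  simp

lemma trace_le (X : Matrix m m ℂ) : ‖X.trace‖ ≤ Fintype.card m * ‖X‖ := by
  rw [Matrix.trace]
  refine (norm_sum_le _ _).trans ?_
  refine (Finset.sum_le_card_nsmul _ _ ‖X‖ fun i _ => entry_le X i i).trans ?_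
  simp

lemma norm_one_le : ‖(1 : Matrix m m ℂ)‖ ≤ 1 := by
  rw [← Matrix.diagonal_one, Matrix.l2_opNorm_diagonal]
  exact (pi_norm_le_iff_of_nonneg zero_le_one).2 fun i => by simp

lemma TB.trace {M : Matrix m m ℂ} {c : ℝ} (hc : 0 ≤ c) (h : TB M c) : ‖M.trace‖ ≤ c := by
  have := h 1
  rw [Matrix.one_mul] at this
  exact this.trans (mul_le_of_le_one_right hc norm_one_le)

lemma TB.of_norm {M : Matrix m m ℂ} {c : ℝ} (h : ‖M‖ ≤ c) : TB M (Fintype.card m * c) := fun X => by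
  refine (trace_le _).trans ?_
  rw [mul_assoc]
  refine mul_le_mul_of_nonneg_left ?_ (by positivity)
  refine (Matrix.l2_opNorm_mul _ _).trans ?_
  rw [mul_comm]
  exact mul_le_mul_of_nonneg_right h (norm_nonneg _)

/-- Functional calculus of a Hermitian matrix. -/
def fc {M : Matrix m m ℂ} (hM : M.IsHermitian) (g : ℝ → ℂ) : Matrix m m ℂ :=
  (hM.eigenvectorUnitary : Matrix m m ℂ) * Matrix.diagonal (fun i => g (hM.eigenvalues i)) *
    star (hM.eigenvectorUnitary : Matrix m m ℂ)

variable {M : Matrix m m ℂ} (hM : M.IsHermitian)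

lemma fc_mul (g h : ℝ → ℂ) : fc hM g * fc hM h = fc hM (fun x => g x * h x) := by
  unfold fc
  have : star (hM.eigenvectorUnitary : Matrix m m ℂ) * (hM.eigenvectorUnitary : Matrix m m ℂ) = 1 :=
    Unitary.coe_star_mul_self _
  rw [← Matrix.diagonal_mul_diagonal]
  simp only [Matrix.mul_assoc]
  rw [← Matrix.mul_assoc (star _) (hM.eigenvectorUnitary : Matrix m m ℂ), this, Matrix.one_mul]

lemma fc_add (g h : ℝ → ℂ) : fc hM (fun x => g x + h x) = fc hM g + fc hM h := by
  unfold fc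
  rw [← Matrix.diagonal_add, Matrix.mul_add, Matrix.add_mul]

lemma fc_sub (g h : ℝ → ℂ) : fc hM (fun x => g x - h x) = fc hM g - fc hM h := by
  unfold fc
  rw [← Matrix.diagonal_sub, Matrix.mul_sub, Matrix.sub_mul]

lemma fc_const (a : ℂ) : fc hM (fun _ => a) = a • 1 := by
  unfold fc
  have : (hM.eigenvectorUnitary : Matrix m m ℂ) * star (hM.eigenvectorUnitary : Matrix m m ℂ)  = 1 :=
    Unitary.coe_mul_star_self _
  rw [← Matrix.smul_one_eq_diagonal, Matrix.mul_smul, Matrix.mul_one, Matrix.smul_mul, this]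

lemma fc_id : fc hM (fun x => (x : ℂ)) = M := by
  conv_rhs => rw [hM.spectral_theorem]
  rfl

lemma fc_star (g : ℝ → ℂ) : (fc hM g)ᴴ = fc hM (fun x => star (g x)) := by
  unfold fc
  rw [Matrix.conjTranspose_mul, Matrix.conjTranspose_mul, Matrix.diagonal_conjTranspose,
    Matrix.star_eq_conjTranspose, Matrix.conjTranspose_conjTranspose, Matrix.mul_assoc]
  rfl

lemma fc_norm (g : ℝ → ℂ) {c : ℝ} (hc : 0 ≤ c) (hg : ∀ i, ‖g (hM.eigenvalues i)‖ ≤ c) :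
    ‖fc hM g‖ ≤ c := by
  unfold fc
  have h1 : ∀ X : Matrix m m ℂ, ‖X * star (hM.eigenvectorUnitary : Matrix m m ℂ)‖ = ‖X‖ := by
    intro X
    exact CStarRing.norm_mul_coe_unitary X (star hM.eigenvectorUnitary)
  rw [h1, CStarRing.norm_coe_unitary_mul, Matrix.l2_opNorm_diagonal]
  exact (pi_norm_le_iff_of_nonneg hc).2 hg

lemma fc_trace (g : ℝ → ℂ) : (fc hM g).trace = ∑ i, g (hM.eigenvalues i) := by
  unfold fc
  rw [Matrix.trace_mul_comm, ← Matrix.mul_assoc, Unitary.coe_star_mul_self, Matrix.one_mul,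
    Matrix.trace_diagonal]

lemma eigSum_eq (F : ℂ → ℂ) : eigSum F M = ∑ i, F (hM.eigenvalues i : ℂ) := by
  unfold eigSum
  rw [hM.roots_charpoly_eq_eigenvalues, Multiset.map_map]
  rfl

/-- Resolvent function. -/
def uu (x : ℝ) : ℂ := ((x : ℂ) + Complex.I)⁻¹

lemma uu_ne (x : ℝ) : (x : ℂ) + Complex.I ≠ 0 := by
  intro h
  have := congrArg Complex.im h
  simp at this

lemma uu_norm_sq (x : ℝ) : ‖uu x‖ ^ 2 = (x ^ 2 + 1)⁻¹ := by
  rw [uu, norm_inv, inv_pow, Complex.sq_norm, Complex.normSq_apply]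
  simp [sq]

lemma uu_norm (x : ℝ) : ‖uu x‖ ≤ 1 := by
  have h := uu_norm_sq x
  have : (x ^ 2 + 1)⁻¹ ≤ (1 : ℝ) := inv_le_one_of_one_le₀ (by nlinarith [sq_nonneg x])
  nlinarith [norm_nonneg (uu x)]

lemma uu_norm_x (x : ℝ) : ‖uu x * x * star (uu x)‖ ≤ 1 := by
  have h := uu_norm_sq x
  rw [norm_mul, norm_mul, norm_star, Complex.norm_real, mul_right_comm, ← sq, h, Real.norm_eq_abs,
    inv_mul_le_iff₀ (by positivity)]
  nlinarith [sq_abs x, sq_nonneg (|x| - 1), abs_nonneg x]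

lemma res_right : fc hM uu * (M + Complex.I • 1) = 1 := by
  have : M + Complex.I • 1 = fc hM (fun x => (x : ℂ) + Complex.I) := by
    rw [fc_add, fc_id, fc_const]
  rw [this, fc_mul]
  have : (fun x : ℝ => uu x * ((x : ℂ) + Complex.I)) = fun _ => 1 := by
    ext x; exact inv_mul_cancel₀ (uu_ne x)
  rw [this, fc_const, one_smul]

lemma res_left : (M + Complex.I • 1) * fc hM uu = 1 := mul_eq_one_comm.1 (res_right hM)

lemma res_norm : ‖fc hM uu‖ ≤ 1 := fc_norm hM uu zero_le_one fun _ => uu_norm _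

lemma res_sub_s13 {M' : Matrix m m ℂ} (hM' : M'.IsHermitian) :
    fc hM uu - fc hM' uu = fc hM uu * (M' - M) * fc hM' uu := by
  have : M' - M = (M' + Complex.I • 1) - (M + Complex.I • 1) := by abel
  rw [this, Matrix.mul_sub, Matrix.sub_mul, Matrix.mul_assoc, res_left, res_right, Matrix.mul_one,
    Matrix.one_mul]

lemma TB_res {M' : Matrix m m ℂ} (hM' : M'.IsHermitian) {c : ℝ} (hc : 0 ≤ c) (h : TB (M' - M) c) :
    TB (fc hM uu - fc hM' uu) c := by
  rw [res_sub_s13]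
  exact (h.mul_left hc _ (res_norm hM)).mul_right hc _ (res_norm hM')

lemma le_one_of_sq {a : ℝ} (h : a * a ≤ 1) : a ≤ 1 := by nlinarith

lemma TB_res_sv {A B : Matrix m n ℂ} {c : ℝ} (hc : 0 ≤ c) (h : TB (B - A) c) :
    TB (fc (Matrix.isHermitian_mul_conjTranspose_self A) uu -
      fc (Matrix.isHermitian_mul_conjTranspose_self B) uu) (c + c) := by
  set hA := Matrix.isHermitian_mul_conjTranspose_self A
  set hB := Matrix.isHermitian_mul_conjTranspose_self B
  have h1 : ‖fc hA uu * A‖ ≤ 1 := by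
    apply le_one_of_sq
    rw [← Matrix.l2_opNorm_conjTranspose, ← Matrix.l2_opNorm_conjTranspose_mul_self,
      Matrix.conjTranspose_conjTranspose, Matrix.conjTranspose_mul, Matrix.mul_assoc,
      ← Matrix.mul_assoc A, fc_star]
    nth_rw 2 [← fc_id hA]
    rw [fc_mul, fc_mul]
    refine fc_norm _ _ zero_le_one fun i => ?_
    rw [← mul_assoc]; exact uu_norm_x _
  have h2 : ‖Bᴴ * fc hB uu‖ ≤ 1 := by
    apply le_one_of_sq
    rw [← Matrix.l2_opNorm_conjTranspose_mul_self,
      Matrix.conjTranspose_mul, Matrix.conjTranspose_conjTranspose, Matrix.mul_assoc,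
      ← Matrix.mul_assoc B, fc_star]
    nth_rw 2 [← fc_id hB]
    rw [fc_mul, fc_mul]
    refine fc_norm _ _ zero_le_one fun i => ?_
    rw [mul_comm, mul_comm (_ : ℂ) (uu _)]; exact uu_norm_x _
  have key : fc hA uu - fc hB uu = fc hA uu * (B - A) * (Bᴴ * fc hB uu) +
      (fc hA uu * A) * (B - A)ᴴ * fc hB uu := by
    rw [res_sub_s13]
    have : B * Bᴴ - A * Aᴴ = (B - A) * Bᴴ + A * (B - A)ᴴ := by
      rw [Matrix.conjTranspose_sub, Matrix.sub_mul, Matrix.mul_sub]; abel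
    rw [this]
    simp only [Matrix.mul_add, Matrix.add_mul, Matrix.mul_assoc]
  rw [key]
  exact ((h.mul_left hc _ (res_norm hA)).mul_right hc _ h2).add
    ((h.conjTranspose.mul_left hc _ h1).mul_right hc _ (res_norm hB))

end TBsec

/-- Sequences of matrices with trace norm `o(N n)`. -/
def SmallTN {ι κ : ℕ → Type} [∀ n, Fintype (ι n)] [∀ n, Fintype (κ n)] [∀ n, DecidableEq (ι n)]
    (N : ℕ → ℝ) (D : ∀ n, Matrix (ι n) (κ n) ℂ) : Prop :=
  ∀ ε > 0, ∀ᶠ n in atTop, TB (D n) (ε * N n)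

section SmallSec
variable {ι κ : ℕ → Type} [∀ n, Fintype (ι n)] [∀ n, Fintype (κ n)] [∀ n, DecidableEq (ι n)]
  [∀ n, DecidableEq (κ n)] {N : ℕ → ℝ}

lemma SmallTN.zero (hN : ∀ n, 0 ≤ N n) : SmallTN N (fun n => (0 : Matrix (ι n) (κ n) ℂ)) := fun ε hε =>
  Eventually.of_forall fun n => TB.zero.mono (mul_nonneg hε.le (hN n))

lemma SmallTN.add {D D' : ∀ n, Matrix (ι n) (κ n) ℂ} (h : SmallTN N D) (h' : SmallTN N D') :
    SmallTN N (fun n => D n + D' n) := fun ε hε => by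
  filter_upwards [h (ε / 2) (by positivity), h' (ε / 2) (by positivity)] with n h1 h2
  exact (h1.add h2).mono (by linarith)

lemma SmallTN.sum (hN : ∀ n, 0 ≤ N n) {α : Type*} (S : Finset α) (D : α → ∀ n, Matrix (ι n) (κ n) ℂ)
    (h : ∀ a ∈ S, SmallTN N (D a)) : SmallTN N (fun n => ∑ a ∈ S, D a n) := by
  classical
  induction S using Finset.induction_on with
  | empty => simpa using SmallTN.zero hN
  | insert a S ha ih =>
    simp only [Finset.sum_insert ha]
    exact (h a (Finset.mem_insert_self _ _)).add
      (ih fun b hb => h b (Finset.mem_insert_of_mem hb))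

lemma SmallTN.smul {D : ∀ n, Matrix (ι n) (κ n) ℂ} (hN : ∀ n, 0 ≤ N n) (h : SmallTN N D) (a : ℂ) :
    SmallTN N (fun n => a • D n) := fun ε hε => by
  filter_upwards [h (ε / (‖a‖ + 1)) (by positivity)] with n h1
  refine (h1.smul a).mono ?_
  rw [← mul_assoc]
  refine mul_le_mul_of_nonneg_right ?_ (hN n)
  rw [mul_div_assoc', div_le_iff₀ (by positivity)]
  nlinarith [norm_nonneg a]

lemma SmallTN.mul_left {D : ∀ n, Matrix (ι n) (ι n) ℂ} (hN : ∀ n, 0 ≤ N n) (h : SmallTN N D)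
    (Y : ∀ n, Matrix (ι n) (ι n) ℂ) {c : ℝ} (hY : ∀ n, ‖Y n‖ ≤ c) :
    SmallTN N (fun n => Y n * D n) := fun ε hε => by
  have hc : 0 ≤ c := (norm_nonneg _).trans (hY 0)
  filter_upwards [h (ε / (c + 1)) (by positivity)] with n h1 X
  rw [← Matrix.mul_assoc]
  refine (h1 _).trans ?_
  have h2 : ‖X * Y n‖ ≤ ‖X‖ * c := (Matrix.l2_opNorm_mul _ _).trans
    (mul_le_mul_of_nonneg_left (hY n) (norm_nonneg _))
  refine (mul_le_mul_of_nonneg_left h2 (mul_nonneg (by positivity) (hN n))).trans ?_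
  have h3 : ε / (c + 1) * c ≤ ε := by
    rw [div_mul_eq_mul_div, div_le_iff₀ (by positivity)]; nlinarith
  calc ε / (c + 1) * N n * (‖X‖ * c) = (ε / (c + 1) * c) * (N n * ‖X‖) := by ring
    _ ≤ ε * (N n * ‖X‖) := mul_le_mul_of_nonneg_right h3 (mul_nonneg (hN n) (norm_nonneg _))
    _ = _ := by ring

lemma SmallTN.conjTranspose {D : ∀ n, Matrix (ι n) (κ n) ℂ} (h : SmallTN N D) :
    SmallTN N (fun n => (D n)ᴴ) := fun ε hε => by
  filter_upwards [h ε hε] with n h1 using h1.conjTranspose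

lemma SmallTN.mul_right {D : ∀ n, Matrix (ι n) (ι n) ℂ} (hN : ∀ n, 0 ≤ N n) (h : SmallTN N D)
    (Y : ∀ n, Matrix (ι n) (ι n) ℂ) {c : ℝ} (hY : ∀ n, ‖Y n‖ ≤ c) :
    SmallTN N (fun n => D n * Y n) := by
  have := (h.conjTranspose.mul_left hN (fun n => (Y n)ᴴ) (c := c)
    (fun n => by rw [Matrix.l2_opNorm_conjTranspose]; exact hY n)).conjTranspose
  simpa [Matrix.conjTranspose_mul] using this

/-- The compact set where the resolvent function takes its values. -/
abbrev KK : Set ℂ := Metric.closedBall (0 : ℂ) 1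

/-- the resolvent function, as a point of the disc -/
def uK (x : ℝ) : KK := ⟨uu x, by simpa using uu_norm x⟩

instance : CompactSpace KK := isCompact_iff_compactSpace.1 (isCompact_closedBall _ _)

lemma sw {M M' : ∀ n, Matrix (ι n) (ι n) ℂ} (hM : ∀ n, (M n).IsHermitian)
    (hM' : ∀ n, (M' n).IsHermitian) (hN : ∀ n, 0 ≤ N n) {C : ℝ}
    (hC : ∀ n, (Fintype.card (ι n) : ℝ) ≤ C * N n)
    (hR : SmallTN N (fun n => fc (hM n) uu - fc (hM' n) uu)) (h : C(KK, ℂ)) :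
    SmallTN N (fun n => fc (hM n) (fun x => h (uK x)) - fc (hM' n) (fun x => h (uK x))) := by
  have bd : ∀ (M : ∀ n, Matrix (ι n) (ι n) ℂ) (hM : ∀ n, (M n).IsHermitian) (f : C(KK, ℂ)) (n : ℕ),
      ‖fc (hM n) (fun x => f (uK x))‖ ≤ ‖f‖ := fun M hM f n =>
    fc_norm _ _ (norm_nonneg _) fun i => f.norm_coe_le_norm _
  induction h using ContinuousMap.induction_on_of_compact with
  | const r =>
    simp only [ContinuousMap.const_apply, fc_const, sub_self]
    exact SmallTN.zero hN
  | id => exact hR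
  | star_id =>
    have := hR.conjTranspose
    simp only [Matrix.conjTranspose_sub, fc_star] at this
    exact this
  | add f g hf hg =>
    have := hf.add hg
    simp only [ContinuousMap.add_apply, fc_add]
    convert this using 2
    abel
  | mul f g hf hg =>
    have h1 := hg.mul_left hN _ (bd M hM f)
    have h2 := hf.mul_right hN _ (bd M' hM' g)
    simp only [ContinuousMap.mul_apply]
    convert h1.add h2 using 2
    rw [← fc_mul, ← fc_mul, Matrix.mul_sub, Matrix.sub_mul]
    abel
  | frequently f hf =>
    intro ε hε
    have hC' : 0 < |C| + 1 := by positivity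
    set δ := ε / (4 * (|C| + 1)) with hδ
    have hδ0 : 0 < δ := by positivity
    obtain ⟨g, hg, hgf⟩ := (hf.and_eventually (Metric.ball_mem_nhds f hδ0)).exists
    have hfg : ‖f - g‖ ≤ δ := by
      rw [← dist_eq_norm, dist_comm]; exact (Metric.mem_ball.1 hgf).le
    filter_upwards [hg (ε / 2) (by positivity)] with n h1
    have h2 := TB.of_norm ((bd M hM (f - g) n).trans hfg)
    have h3 := (TB.of_norm ((bd M' hM' (f - g) n).trans hfg)).neg
    simp only [ContinuousMap.sub_apply, fc_sub] at h2 h3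
    have h4 := (h1.add h2).add h3
    have h5 : (Fintype.card (ι n) : ℝ) * δ ≤ ε / 4 * N n := by
      have : (Fintype.card (ι n) : ℝ) ≤ (|C| + 1) * N n := (hC n).trans
        (mul_le_mul_of_nonneg_right (by linarith [le_abs_self C]) (hN n))
      calc (Fintype.card (ι n) : ℝ) * δ ≤ (|C| + 1) * N n * δ :=
            mul_le_mul_of_nonneg_right this hδ0.le
        _ = ε / 4 * N n := by rw [hδ]; field_simp
    have h6 := h4.mono (d := ε * N n) (by linarith)
    convert h6 using 1
    abel

lemma hfun_cont (F : ℂ → ℂ) (hF : Continuous F) (hs : HasCompactSupport F) :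
    Continuous (Function.update (fun w : ℂ => F (w⁻¹ - Complex.I)) 0 0) := by
  rw [continuous_iff_continuousAt]
  intro w
  by_cases hw : w = 0
  · subst hw
    rw [continuousAt_update_same]
    have h0 : Tendsto F (Bornology.cobounded ℂ) (𝓝 0) := by
      rw [Metric.cobounded_eq_cocompact]
      exact hs.is_zero_at_infty
    refine h0.comp ?_
    have h1 : Tendsto (fun w : ℂ => w⁻¹) (𝓝[≠] 0) (Bornology.cobounded ℂ) :=
      tendsto_inv₀_nhdsNE_zero
    rw [← tendsto_norm_atTop_iff_cobounded] at h1 ⊢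
    refine tendsto_atTop_mono (fun x => ?_) (tendsto_atTop_add_const_right _ (-1) h1)
    have := norm_sub_norm_le x⁻¹ Complex.I
    simp at this ⊢
    linarith
  · rw [continuousAt_update_of_ne hw]
    have : ContinuousAt (fun w : ℂ => w⁻¹ - Complex.I) w := (continuousAt_inv₀ hw).sub continuousAt_const
    exact hF.continuousAt.comp this

lemma eig_main {M M' : ∀ n, Matrix (ι n) (ι n) ℂ} (hM : ∀ n, (M n).IsHermitian)
    (hM' : ∀ n, (M' n).IsHermitian) (hN : ∀ n, 0 ≤ N n) {C : ℝ}
    (hC : ∀ n, (Fintype.card (ι n) : ℝ) ≤ C * N n)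
    (hR : SmallTN N (fun n => fc (hM n) uu - fc (hM' n) uu))
    (F : ℂ → ℂ) (hF : Continuous F) (hs : HasCompactSupport F) :
    ∀ ε > 0, ∀ᶠ n in atTop, ‖eigSum F (M n) - eigSum F (M' n)‖ ≤ ε * N n := by
  intro ε hε
  let h : C(KK, ℂ) := ⟨fun w => Function.update (fun w : ℂ => F (w⁻¹ - Complex.I)) 0 0 w,
    (hfun_cont F hF hs).comp continuous_subtype_val⟩
  have hx : ∀ x, h (uK x) = F x := by
    intro x
    change Function.update (fun w : ℂ => F (w⁻¹ - Complex.I)) 0 0 (uu x) = F x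
    rw [uu, Function.update_of_ne (inv_ne_zero (uu_ne x)), inv_inv, add_sub_cancel_right]
  filter_upwards [sw hM hM' hN hC hR h ε hε] with n hn
  have := hn.trace (mul_nonneg hε.le (hN n))
  rw [Matrix.trace_sub, fc_trace, fc_trace] at this
  simp only [hx] at this
  rwa [eigSum_eq (hM n), eigSum_eq (hM' n)]

lemma dist_iff {N : ℕ → ℝ} {k : ℕ → ℂ} {a b : ℕ → ℂ} {K : ℝ} (hk : ∀ n, ‖k n‖ * N n ≤ K)
    (h : ∀ ε > 0, ∀ᶠ n in atTop, ‖a n - b n‖ ≤ ε * N n) (l : ℂ) :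
    Tendsto (fun n => k n * a n) atTop (𝓝 l) ↔ Tendsto (fun n => k n * b n) atTop (𝓝 l) := by
  apply tendsto_iff_of_dist
  rw [Metric.tendsto_nhds]
  intro ε hε
  filter_upwards [h (ε / (2 * (|K| + 1))) (by positivity)] with n hn
  rw [Real.dist_eq, sub_zero, abs_of_nonneg dist_nonneg, dist_eq_norm, ← mul_sub, norm_mul]
  have hK : ‖k n‖ * N n ≤ |K| + 1 := (hk n).trans (by linarith [le_abs_self K])
  calc ‖k n‖ * ‖a n - b n‖ ≤ ‖k n‖ * (ε / (2 * (|K| + 1)) * N n) :=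
        mul_le_mul_of_nonneg_left hn (norm_nonneg _)
    _ = ε / (2 * (|K| + 1)) * (‖k n‖ * N n) := by ring
    _ ≤ ε / (2 * (|K| + 1)) * (|K| + 1) := mul_le_mul_of_nonneg_left hK (by positivity)
    _ = ε / 2 := by field_simp
    _ < ε := by linarith

lemma SmallTN.res {M M' : ∀ n, Matrix (ι n) (ι n) ℂ} (hM : ∀ n, (M n).IsHermitian)
    (hM' : ∀ n, (M' n).IsHermitian) (hN : ∀ n, 0 ≤ N n) (h : SmallTN N (fun n => M n - M' n)) :
    SmallTN N (fun n => fc (hM n) uu - fc (hM' n) uu) := fun ε hε => by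
  filter_upwards [h ε hε] with n hn
  refine TB_res (hM n) (hM' n) (mul_nonneg hε.le (hN n)) ?_
  simpa using hn.neg

lemma SmallTN.res_sv {A B : ∀ n, Matrix (ι n) (κ n) ℂ} (hN : ∀ n, 0 ≤ N n)
    (h : SmallTN N (fun n => A n - B n)) :
    SmallTN N (fun n => fc (Matrix.isHermitian_mul_conjTranspose_self (A n)) uu -
      fc (Matrix.isHermitian_mul_conjTranspose_self (B n)) uu) := fun ε hε => by
  filter_upwards [h (ε / 2) (by positivity)] with n hn
  have h1 : TB (B n - A n) (ε / 2 * N n) := by simpa using hn.neg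
  exact (TB_res_sv (mul_nonneg (by positivity) (hN n)) h1).mono (by linarith)

open scoped ComplexOrder in
lemma psd_eig {m n : Type*} [Fintype m] [Fintype n] [DecidableEq m] (X : Matrix m n ℂ) (i : m) :
    0 ≤ (Matrix.isHermitian_mul_conjTranspose_self X).eigenvalues i :=
  (Matrix.posSemidef_self_mul_conjTranspose X).eigenvalues_nonneg i

lemma sv_main {A B : ∀ n, Matrix (ι n) (κ n) ℂ} (hN : ∀ n, 0 ≤ N n) {C : ℝ}
    (hC : ∀ n, (Fintype.card (ι n) : ℝ) ≤ C * N n)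
    (h : SmallTN N (fun n => A n - B n)) (F : ℝ → ℂ) (hF : Continuous F) (hs : HasCompactSupport F) :
    ∀ ε > 0, ∀ᶠ n in atTop, ‖svSum F (A n) - svSum F (B n)‖ ≤ ε * N n := by
  have hG : Continuous (fun z : ℂ => F (Real.sqrt ‖z‖)) := by fun_prop
  have hGs : HasCompactSupport (fun z : ℂ => F (Real.sqrt ‖z‖)) := by
    obtain ⟨R, hR⟩ := hs.isCompact.isBounded.subset_closedBall (0 : ℝ)
    refine HasCompactSupport.of_support_subset_isCompact (isCompact_closedBall (0 : ℂ) (R ^ 2)) ?_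
    intro z hz
    have h1 := hR (subset_tsupport F hz)
    simp only [Metric.mem_closedBall, dist_zero_right, Real.norm_eq_abs] at h1 ⊢
    rw [abs_of_nonneg (Real.sqrt_nonneg _)] at h1
    rw [← Real.sq_sqrt (norm_nonneg z)]
    exact pow_le_pow_left₀ (Real.sqrt_nonneg _) h1 2
  intro ε hε
  filter_upwards [eig_main (fun n => Matrix.isHermitian_mul_conjTranspose_self (A n))
    (fun n => Matrix.isHermitian_mul_conjTranspose_self (B n)) hN hC (h.res_sv hN) _ hG hGs ε hε]
    with n hn
  rw [eigSum_eq (Matrix.isHermitian_mul_conjTranspose_self (A n)),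
    eigSum_eq (Matrix.isHermitian_mul_conjTranspose_self (B n))] at hn
  have e : ∀ (X : Matrix (ι n) (κ n) ℂ) (i : ι n),
      ‖(((Matrix.isHermitian_mul_conjTranspose_self X).eigenvalues i : ℝ) : ℂ)‖ =
        (Matrix.isHermitian_mul_conjTranspose_self X).eigenvalues i := by
    intro X i
    rw [Complex.norm_real, Real.norm_eq_abs, abs_of_nonneg]
    exact psd_eig X i
  simp only [e] at hn
  unfold svSum
  rw [sub_sub_sub_cancel_right]
  exact hn

end SmallSec

section Toep

open AddCircle

instance factTwoPi : Fact (0 < 2 * π) := ⟨Real.two_pi_pos⟩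

lemma bilin_le {m n : Type*} [Fintype m] [Fintype n] [DecidableEq m] (X : Matrix n m ℂ)
    (v : m → ℂ) (w : n → ℂ) (hv : ∀ i, ‖v i‖ ≤ 1) (hw : ∀ i, ‖w i‖ ≤ 1) :
    ‖∑ Q, ∑ P, w Q * (X Q P * v P)‖ ≤
      ‖X‖ * (Real.sqrt (Fintype.card m) * Real.sqrt (Fintype.card n)) := by
  have nb : ∀ {k : Type _} [Fintype k] (u : k → ℂ), (∀ i, ‖u i‖ ≤ 1) →
      ‖WithLp.toLp 2 u‖ ≤ Real.sqrt (Fintype.card k) := by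
    intro k _ u hu
    rw [EuclideanSpace.norm_eq]
    apply Real.sqrt_le_sqrt
    refine (Finset.sum_le_card_nsmul _ _ 1 fun i _ => ?_).trans (by simp)
    exact pow_le_one₀ (norm_nonneg _) (hu i)
  have nb2 : ∀ {k : Type _} [Fintype k] (u : k → ℂ), (∀ i, ‖u i‖ ≤ 1) →
      ‖WithLp.toLp 2 u‖ ≤ Real.sqrt (Fintype.card k) := by
    intro k _ u hu
    rw [EuclideanSpace.norm_eq]
    apply Real.sqrt_le_sqrt
    refine (Finset.sum_le_card_nsmul _ _ 1 fun i _ => ?_).trans (by simp)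
    exact pow_le_one₀ (norm_nonneg _) (hu i)
  have e : ∑ Q, ∑ P, w Q * (X Q P * v P) =
      inner ℂ (WithLp.toLp 2 (star w) : EuclideanSpace ℂ n) (WithLp.toLp 2 (X *ᵥ v)) := by
    rw [EuclideanSpace.inner_eq_star_dotProduct]
    simp [dotProduct, Matrix.mulVec, Finset.mul_sum, mul_comm]
  rw [e]
  refine (norm_inner_le_norm _ _).trans ?_
  have h1 := nb2 (star w) (by simpa using hw)
  have h2 := Matrix.l2_opNorm_mulVec X (WithLp.toLp 2 v)
  have h3 := nb v hv
  calc _ ≤ Real.sqrt (Fintype.card n) * (‖X‖ * Real.sqrt (Fintype.card m)) := by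
        refine mul_le_mul h1 (h2.trans ?_) (norm_nonneg _) (Real.sqrt_nonneg _)
        exact mul_le_mul_of_nonneg_left h3 (norm_nonneg _)
    _ = _ := by ring

lemma TB_toep {m n : Type*} [Fintype m] [Fintype n] [DecidableEq m]
    (α : m → ℂ) (β : n → ℂ) (hα : ∀ i, ‖α i‖ ≤ 1) (hβ : ∀ i, ‖β i‖ ≤ 1) (p : m → ℤ) (q : n → ℤ)
    (g : AddCircle (2 * π) → ℂ) (hg : Integrable g haarAddCircle) :
    TB (Matrix.of fun P Q => α P * β Q * fourierCoeff g (p P - q Q))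
      ((∫ x, ‖g x‖ ∂haarAddCircle) * (Real.sqrt (Fintype.card m) * Real.sqrt (Fintype.card n))) := by
  intro X
  have hint : ∀ k : ℤ, Integrable (fun x => fourier (-k) x • g x)
      (haarAddCircle : Measure (AddCircle (2 * π))) := fun k => hg.fourier_smul (-k)
  have e : (X * (Matrix.of fun P Q => α P * β Q * fourierCoeff g (p P - q Q))).trace =
      ∫ x, (∑ Q, ∑ P, (β Q * fourier (q Q) x) * (X Q P * (α P * fourier (-(p P)) x))) * g x
        ∂haarAddCircle := by
    simp only [Matrix.trace, Matrix.diag, Matrix.mul_apply, Matrix.of_apply, fourierCoeff]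
    simp only [Finset.sum_mul]
    have e2 : ∀ Q P (x : AddCircle (2 * π)),
        (β Q * fourier (q Q) x) * (X Q P * (α P * fourier (-(p P)) x)) * g x =
        X Q P * (α P * β Q) * (fourier (-(p P - q Q)) x • g x) := by
      intro Q P x
      rw [neg_sub, sub_eq_add_neg, fourier_add, smul_eq_mul]
      ring
    simp only [e2]
    rw [integral_finsetSum]
    · refine Finset.sum_congr rfl fun Q _ => ?_
      rw [integral_finsetSum]
      · refine Finset.sum_congr rfl fun P _ => ?_
        rw [integral_const_mul]; ring
      · intro P _; exact (hint _).const_mul _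
    · intro Q _
      exact integrable_finsetSum _ fun P _ => (hint _).const_mul _
  have fn : ∀ (k : ℤ) (x : AddCircle (2 * π)), ‖fourier k x‖ = 1 := by
    intro k x; rw [fourier_apply]; exact Circle.norm_coe _
  rw [e]
  refine (norm_integral_le_of_norm_le (g := fun x => ‖X‖ * (Real.sqrt (Fintype.card m) *
    Real.sqrt (Fintype.card n)) * ‖g x‖) (hg.norm.const_mul _) ?_).trans ?_
  · refine Eventually.of_forall fun x => ?_
    rw [norm_mul]
    refine mul_le_mul_of_nonneg_right ?_ (norm_nonneg _)
    refine bilin_le X (fun P => α P * fourier (-(p P)) x) (fun Q => β Q * fourier (q Q) x) ?_ ?_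
    · intro i; rw [norm_mul, fn, mul_one]; exact hα i
    · intro i; rw [norm_mul, fn, mul_one]; exact hβ i
  · rw [integral_const_mul]
    apply le_of_eq; ring

variable {ν s t : ℕ}

/-- One scalar component of the difference. -/
def EE (ns : Fin ν → ℕ) (i j : Fin ν) (a : Fin s) (b : Fin t) (co : ℤ → ℂ) :
    Matrix ((i : Fin ν) × (Fin (ns i) × Fin s)) ((j : Fin ν) × (Fin (ns j) × Fin t)) ℂ :=
  Matrix.of fun P Q => if P.1 = i ∧ P.2.2 = a ∧ Q.1 = j ∧ Q.2.2 = b ∧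
    ¬ ((P.2.1 : ℕ) < min (ns i) (ns j) ∧ (Q.2.1 : ℕ) < min (ns i) (ns j)) then
    co (((P.2.1 : ℕ) : ℤ) - ((Q.2.1 : ℕ) : ℤ)) else 0

lemma diff_eq (f : Fin ν → Fin ν → ℝ → Matrix (Fin s) (Fin t) ℂ) (ns : Fin ν → ℕ) :
    blockMat ν s t f ns - blockMatTilde ν s t f ns =
      ∑ x : Fin ν × Fin ν × Fin s × Fin t,
        EE ns x.1 x.2.1 x.2.2.1 x.2.2.2 (fun k => fCoeff (f x.1 x.2.1) k x.2.2.1 x.2.2.2) := by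
  ext P Q
  rw [Matrix.sum_apply, Finset.sum_eq_single (P.1, Q.1, P.2.2, Q.2.2)]
  · simp only [blockMat, blockMatTilde, EE, Matrix.sub_apply, Matrix.of_apply, true_and]
    split_ifs <;> simp_all
  · rintro ⟨i, j, a, b⟩ _ h
    simp only [EE, Matrix.of_apply]
    rw [if_neg]
    rintro ⟨rfl, rfl, rfl, rfl, _⟩
    exact h rfl
  · intro h; exact absurd (Finset.mem_univ _) h

lemma card_row (ns : Fin ν → ℕ) :
    Fintype.card ((i : Fin ν) × (Fin (ns i) × Fin s)) = (∑ i, ns i) * s := by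
  simp [Finset.sum_mul]

lemma TB_EE (ns : Fin ν → ℕ) (i j : Fin ν) (a : Fin s) (b : Fin t)
    (g : AddCircle (2 * π) → ℂ) (hg : Integrable g haarAddCircle) :
    TB (EE ns i j a b (fourierCoeff g))
      (2 * (s * t) * (∫ x, ‖g x‖ ∂haarAddCircle) * ((∑ i, ns i : ℕ) : ℝ)) := by
  have bd : ∀ (c : Prop) [Decidable c], ‖(if c then (1 : ℂ) else 0)‖ ≤ 1 := by
    intro c; split_ifs <;> simp
  have h1 := TB_toep
    (fun P : (i : Fin ν) × (Fin (ns i) × Fin s) => if P.1 = i ∧ P.2.2 = a then (1 : ℂ) else 0)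
    (fun Q : (j : Fin ν) × (Fin (ns j) × Fin t) => if Q.1 = j ∧ Q.2.2 = b then (1 : ℂ) else 0)
    (fun _ => bd _) (fun _ => bd _) (fun P => ((P.2.1 : ℕ) : ℤ)) (fun Q => ((Q.2.1 : ℕ) : ℤ)) g hg
  have h2 := (TB_toep
    (fun P : (i : Fin ν) × (Fin (ns i) × Fin s) =>
      if P.1 = i ∧ P.2.2 = a ∧ (P.2.1 : ℕ) < min (ns i) (ns j) then (1 : ℂ) else 0)
    (fun Q : (j : Fin ν) × (Fin (ns j) × Fin t) =>
      if Q.1 = j ∧ Q.2.2 = b ∧ (Q.2.1 : ℕ) < min (ns i) (ns j) then (1 : ℂ) else 0)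
    (fun _ => bd _) (fun _ => bd _) (fun P => ((P.2.1 : ℕ) : ℤ)) (fun Q => ((Q.2.1 : ℕ) : ℤ))
      g hg).neg
  have h3 := h1.add h2
  have e : EE ns i j a b (fourierCoeff g) =
      (Matrix.of fun P Q => (if P.1 = i ∧ P.2.2 = a then (1 : ℂ) else 0) *
        (if Q.1 = j ∧ Q.2.2 = b then (1 : ℂ) else 0) *
          fourierCoeff g (((P.2.1 : ℕ) : ℤ) - ((Q.2.1 : ℕ) : ℤ))) +
      -(Matrix.of fun P Q =>
        (if P.1 = i ∧ P.2.2 = a ∧ (P.2.1 : ℕ) < min (ns i) (ns j) then (1 : ℂ) else 0) *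
        (if Q.1 = j ∧ Q.2.2 = b ∧ (Q.2.1 : ℕ) < min (ns i) (ns j) then (1 : ℂ) else 0) *
          fourierCoeff g (((P.2.1 : ℕ) : ℤ) - ((Q.2.1 : ℕ) : ℤ))) := by
    ext P Q
    simp only [EE, Matrix.add_apply, Matrix.neg_apply, Matrix.of_apply]
    generalize min (ns i) (ns j) = μ
    generalize fourierCoeff g (((P.2.1 : ℕ) : ℤ) - ((Q.2.1 : ℕ) : ℤ)) = z
    split_ifs <;> first | (simp; done) | (exfalso; tauto)
  rw [e]
  refine h3.mono ?_
  rw [card_row, card_row]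
  have hI : 0 ≤ ∫ x, ‖g x‖ ∂(haarAddCircle : Measure (AddCircle (2 * π))) :=
    integral_nonneg fun _ => norm_nonneg _
  have hs : (1 : ℝ) ≤ s := by exact_mod_cast Fin.pos a
  have ht : (1 : ℝ) ≤ t := by exact_mod_cast Fin.pos b
  have hS : (0 : ℝ) ≤ ((∑ i, ns i : ℕ) : ℝ) := by positivity
  have key : Real.sqrt (((∑ i, ns i) * s : ℕ) : ℝ) * Real.sqrt (((∑ i, ns i) * t : ℕ) : ℝ) ≤
      (s * t) * ((∑ i, ns i : ℕ) : ℝ) := by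
    rw [← Real.sqrt_mul (by positivity)]
    apply Real.sqrt_le_iff.2 ⟨by positivity, ?_⟩
    rw [Nat.cast_mul, Nat.cast_mul]
    have : (s : ℝ) * t ≤ (s * t) ^ 2 := by
      nlinarith [one_le_mul_of_one_le_of_one_le hs ht]
    nlinarith [mul_le_mul_of_nonneg_left this (mul_nonneg hS hS)]
  nlinarith [mul_le_mul_of_nonneg_left key hI]

lemma TB_EE_single (ns : Fin ν → ℕ) (i j : Fin ν) (a : Fin s) (b : Fin t) (k : ℤ) :
    TB (EE ns i j a b (Pi.single k 1)) (2 * |k| + 1 : ℤ) := by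
  classical
  intro X
  set S : Finset (((j : Fin ν) × (Fin (ns j) × Fin t)) × ((i : Fin ν) × (Fin (ns i) × Fin s))) :=
    Finset.univ.filter fun x => EE ns i j a b (Pi.single k 1) x.2 x.1 ≠ 0 with hS
  have prop : ∀ x ∈ S, x.2.1 = i ∧ x.2.2.2 = a ∧ x.1.1 = j ∧ x.1.2.2 = b ∧
      ¬ ((x.2.2.1 : ℕ) < min (ns i) (ns j) ∧ (x.1.2.1 : ℕ) < min (ns i) (ns j)) ∧
      ((x.2.2.1 : ℕ) : ℤ) - ((x.1.2.1 : ℕ) : ℤ) = k := by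
    intro x hx
    have hx := (Finset.mem_filter.1 hx).2
    simp only [EE, Matrix.of_apply] at hx
    rw [ite_ne_right_iff] at hx
    obtain ⟨⟨h1, h2, h3, h4, h5⟩, h6⟩ := hx
    refine ⟨h1, h2, h3, h4, h5, ?_⟩
    by_contra h7
    rw [Pi.single_eq_of_ne h7] at h6
    exact h6 rfl
  have hcard : (S.card : ℤ) ≤ 2 * |k| + 1 := by
    have h1 : S.card ≤ (Finset.Icc (-|k|) |k|).card := by
      refine Finset.card_le_card_of_injOn
        (fun x => ((x.2.2.1 : ℕ) : ℤ) - ((min (ns i) (ns j) : ℕ) : ℤ)) ?_ ?_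
      · rintro ⟨⟨j', q, b'⟩, ⟨i', p, a'⟩⟩ hx
        obtain ⟨h1, h2, h3, h4, h5, h6⟩ := prop _ hx
        dsimp only at h1 h2 h3 h4 h5 h6 ⊢
        subst h1 h3
        have hp := p.2
        have hq := q.2
        simp only [Finset.coe_Icc, Set.mem_Icc]
        rcases abs_cases k with ⟨hk, _⟩ | ⟨hk, _⟩ <;> rw [hk] <;> omega
      · rintro ⟨⟨j', q, b'⟩, ⟨i', p, a'⟩⟩ hx ⟨⟨j'', q', b''⟩, ⟨i'', p', a''⟩⟩ hy hxy
        obtain ⟨h1, h2, h3, h4, h5, h6⟩ := prop _ hx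
        obtain ⟨g1, g2, g3, g4, g5, g6⟩ := prop _ hy
        dsimp only at h1 h2 h3 h4 h5 h6 g1 g2 g3 g4 g5 g6 hxy
        subst h1 h2 h3 h4 g1 g2 g3 g4
        have e1 : p = p' := by ext; omega
        have e2 : q = q' := by ext; omega
        rw [e1, e2]
    have h2 : ((Finset.Icc (-|k|) |k|).card : ℤ) = 2 * |k| + 1 := by
      rw [Int.card_Icc, Int.toNat_of_nonneg (by linarith [abs_nonneg k])]; ring
    rw [← h2]; exact_mod_cast h1
  have entry1 : ∀ P Q, ‖EE ns i j a b (Pi.single k 1) P Q‖ ≤ 1 := by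
    intro P Q
    simp only [EE, Matrix.of_apply, Pi.single_apply]
    split_ifs <;> simp
  have e : (X * EE ns i j a b (Pi.single k 1)).trace =
      ∑ x ∈ S, X x.1 x.2 * EE ns i j a b (Pi.single k 1) x.2 x.1 := by
    simp only [Matrix.trace, Matrix.diag, Matrix.mul_apply]
    rw [← Finset.sum_product', Finset.univ_product_univ]
    symm
    apply Finset.sum_subset (Finset.subset_univ _)
    intro x _ hx
    have : EE ns i j a b (Pi.single k 1) x.2 x.1 = 0 := by
      by_contra h
      exact hx (Finset.mem_filter.2 ⟨Finset.mem_univ _, h⟩)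
    rw [this, mul_zero]
  rw [e]
  refine (norm_sum_le _ _).trans ?_
  refine (Finset.sum_le_card_nsmul _ _ ‖X‖ fun x _ => ?_).trans ?_
  · rw [norm_mul]
    exact mul_le_of_le_one_right (norm_nonneg _) (entry1 _ _) |>.trans (entry_le X _ _)
  · rw [nsmul_eq_mul]
    refine mul_le_mul_of_nonneg_right ?_ (norm_nonneg _)
    exact_mod_cast hcard

lemma EE_add (ns : Fin ν → ℕ) (i j : Fin ν) (a : Fin s) (b : Fin t) (c d : ℤ → ℂ) :
    EE ns i j a b (c + d) = EE ns i j a b c + EE ns i j a b d := by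
  ext P Q
  simp only [EE, Matrix.of_apply, Matrix.add_apply, Pi.add_apply]
  split_ifs <;> simp

lemma EE_smul (ns : Fin ν → ℕ) (i j : Fin ν) (a : Fin s) (b : Fin t) (r : ℂ) (d : ℤ → ℂ) :
    EE ns i j a b (r • d) = r • EE ns i j a b d := by
  ext P Q
  simp only [EE, Matrix.of_apply, Matrix.smul_apply, Pi.smul_apply]
  split_ifs <;> simp

lemma fc_Lp_add (φ ψ : Lp ℂ 1 (haarAddCircle : Measure (AddCircle (2 * π)))) :
    fourierCoeff (φ + ψ : Lp ℂ 1 (haarAddCircle : Measure (AddCircle (2 * π)))) =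
      fourierCoeff φ + fourierCoeff ψ := by
  rw [fourierCoeff_congr_ae (Lp.coeFn_add φ ψ)]
  exact fourierCoeff.add (L1.integrable_coeFn φ) (L1.integrable_coeFn ψ)

lemma fc_Lp_smul (r : ℂ) (φ : Lp ℂ 1 (haarAddCircle : Measure (AddCircle (2 * π)))) :
    fourierCoeff (r • φ : Lp ℂ 1 (haarAddCircle : Measure (AddCircle (2 * π)))) =
      r • fourierCoeff φ := by
  rw [fourierCoeff_congr_ae (Lp.coeFn_smul r φ)]
  ext n
  exact fourierCoeff.const_smul _ _ _

lemma small_Lp (nsz : ℕ → Fin ν → ℕ) (htot : Tendsto (fun n => ∑ i, nsz n i) atTop atTop)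
    (i j : Fin ν) (a : Fin s) (b : Fin t)
    (φ : Lp ℂ 1 (haarAddCircle : Measure (AddCircle (2 * π)))) :
    SmallTN (fun n => ((∑ i, nsz n i : ℕ) : ℝ))
      (fun n => EE (nsz n) i j a b (fourierCoeff φ)) := by
  have hN : ∀ n, (0 : ℝ) ≤ ((∑ i, nsz n i : ℕ) : ℝ) := fun n => by positivity
  have htot' : Tendsto (fun n => ((∑ i, nsz n i : ℕ) : ℝ)) atTop atTop :=
    tendsto_natCast_atTop_atTop.comp htot
  have hspan : ∀ ψ ∈ Submodule.span ℂ (Set.range (@fourierLp (2 * π) _ 1 _)),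
      SmallTN (fun n => ((∑ i, nsz n i : ℕ) : ℝ))
        (fun n => EE (nsz n) i j a b (fourierCoeff ψ)) := by
    intro ψ hψ
    induction hψ using Submodule.span_induction with
    | mem ψ h =>
      obtain ⟨k, rfl⟩ := h
      intro ε hε
      rw [fourierCoeff_congr_ae (coeFn_fourierLp 1 k), fourierCoeff_fourier]
      filter_upwards [(tendsto_atTop.1 (htot'.const_mul_atTop hε)) ((2 * |k| + 1 : ℤ) : ℝ)] with n hn
      exact (TB_EE_single _ _ _ _ _ k).mono hn
    | zero =>
      have : (0 : Lp ℂ 1 (haarAddCircle : Measure (AddCircle (2 * π)))) = (0 : ℂ) • 0 := by simp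
      rw [this, fc_Lp_smul]
      simp only [zero_smul, EE_smul]
      have e : ∀ n, EE (nsz n) i j a b (0 : ℤ → ℂ) = 0 := by
        intro n; ext P Q; simp [EE]
      simp only [e]
      exact SmallTN.zero hN
    | add x y _ _ hx hy =>
      rw [fc_Lp_add]
      simp only [EE_add]
      exact hx.add hy
    | smul r x _ hx =>
      rw [fc_Lp_smul]
      simp only [EE_smul]
      exact hx.smul hN r
  have hφ : φ ∈ closure (Submodule.span ℂ (Set.range (@fourierLp (2 * π) _ 1 _)) : Set _) := by
    rw [← Submodule.topologicalClosure_coe, span_fourierLp_closure_eq_top ENNReal.one_ne_top]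
    trivial
  intro ε hε
  set δ := ε / (2 * (2 * (s * t) + 1)) with hδ
  have hδ0 : 0 < δ := by positivity
  obtain ⟨ψ, hψ, hd⟩ := Metric.mem_closure_iff.1 hφ δ hδ0
  filter_upwards [hspan ψ hψ (ε / 2) (by positivity)] with n hn
  have h2 := TB_EE (nsz n) i j a b _ (L1.integrable_coeFn (φ - ψ))
  rw [← L1.norm_eq_integral_norm, ← dist_eq_norm] at h2
  have e : φ = ψ + (φ - ψ) := by abel
  rw [e, fc_Lp_add, EE_add]
  refine (hn.add h2).mono ?_
  have h3 : 2 * (s * t : ℝ) * dist φ ψ ≤ ε / 2 := by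
    calc 2 * (s * t : ℝ) * dist φ ψ ≤ (2 * (s * t : ℝ) + 1) * δ := by
          refine mul_le_mul (by linarith) hd.le dist_nonneg (by positivity)
      _ = ε / 2 := by rw [hδ]; field_simp
  nlinarith [mul_le_mul_of_nonneg_right h3 (hN n)]

lemma coeff_Lp {g : ℝ → ℂ} (hg : IntervalIntegrable g volume (-π) π) :
    ∃ φ : Lp ℂ 1 (haarAddCircle : Measure (AddCircle (2 * π))), ∀ k : ℤ,
      ((2 * π : ℝ) : ℂ)⁻¹ *
        ∫ θ in (-π : ℝ)..π, g θ * Complex.exp (-(Complex.I * (k : ℂ) * (θ : ℂ))) =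
      fourierCoeff φ k := by
  have hpi : -π + 2 * π = π := by ring
  have hm : MemLp (AddCircle.liftIoc (2 * π) (-π) g) 1
      (haarAddCircle : Measure (AddCircle (2 * π))) := by
    rw [memLp_haarAddCircle_iff]
    apply MemLp.memLp_liftIoc
    rw [hpi, memLp_one_iff_integrable]
    rw [intervalIntegrable_iff_integrableOn_Ioc_of_le (by linarith [Real.pi_pos])] at hg
    exact hg
  refine ⟨hm.toLp, fun k => ?_⟩
  rw [fourierCoeff_congr_ae hm.coeFn_toLp, fourierCoeff_liftIoc_eq, fourierCoeffOn_eq_integral]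
  have h2 : -π + 2 * π - -π = 2 * π := by ring
  simp only [fourier_coe_apply]
  rw [hpi]
  have h3 : π - -π = 2 * π := by ring
  rw [h3, one_div, Complex.real_smul, Complex.ofReal_inv]
  congr 1
  refine intervalIntegral.integral_congr fun x _ => ?_
  simp only [smul_eq_mul]
  rw [mul_comm]
  congr 2
  have : (π : ℂ) ≠ 0 := by exact_mod_cast Real.pi_ne_zero
  push_cast
  field_simp

lemma smallTN_diff (f : Fin ν → Fin ν → ℝ → Matrix (Fin s) (Fin t) ℂ)
    (hf : ∀ i j a b, IntervalIntegrable (fun θ => f i j θ a b) volume (-π) π)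
    (nsz : ℕ → Fin ν → ℕ) (htot : Tendsto (fun n => ∑ i, nsz n i) atTop atTop) :
    SmallTN (fun n => ((∑ i, nsz n i : ℕ) : ℝ))
      (fun n => blockMat ν s t f (nsz n) - blockMatTilde ν s t f (nsz n)) := by
  have hD : ∀ x : Fin ν × Fin ν × Fin s × Fin t, SmallTN (fun n => ((∑ i, nsz n i : ℕ) : ℝ))
      (fun n => EE (nsz n) x.1 x.2.1 x.2.2.1 x.2.2.2
        (fun k => fCoeff (f x.1 x.2.1) k x.2.2.1 x.2.2.2)) := by
    rintro ⟨i, j, a, b⟩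
    obtain ⟨φ, hφ⟩ := coeff_Lp (hf i j a b)
    have : (fun k => fCoeff (f i j) k a b) = fourierCoeff φ := by
      ext k; exact hφ k
    simp only [this]
    exact small_Lp nsz htot i j a b φ
  have key : SmallTN (fun n => ((∑ i, nsz n i : ℕ) : ℝ))
      (fun n => ∑ x ∈ (Finset.univ : Finset (Fin ν × Fin ν × Fin s × Fin t)),
        (fun (x : Fin ν × Fin ν × Fin s × Fin t) n => EE (nsz n) x.1 x.2.1 x.2.2.1 x.2.2.2
      (fun k => fCoeff (f x.1 x.2.1) k x.2.2.1 x.2.2.2)) x n) := by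
    exact SmallTN.sum (ι := fun n => (i : Fin ν) × (Fin (nsz n i) × Fin s))
      (κ := fun n => (j : Fin ν) × (Fin (nsz n j) × Fin t))
      (fun n => Nat.cast_nonneg _) Finset.univ _ (fun x _ => hD x)
  have e : (fun n => blockMat ν s t f (nsz n) - blockMatTilde ν s t f (nsz n)) = _ :=
    funext fun n => diff_eq f (nsz n)
  rw [e]
  exact key

end Toep

end Helpers

/-- under the standard assumptions on the block sizes
(`n_i/n → c_i ∈ (0,1)`, `c_1 + ⋯ + c_ν = 1`, `n → ∞`), the sequences `{A_n}_n` and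
`{Ã_n}_n` have the same singular value symbols, and — when all the matrices involved
are Hermitian — the same eigenvalue symbols. -/
theorem tilde_equivalence
    (ν s t : ℕ) (hν : 2 ≤ ν) (hs : 0 < s) (ht : 0 < t)
    (f : Fin ν → Fin ν → ℝ → Matrix (Fin s) (Fin t) ℂ)
    (hf : ∀ i j a b, IntervalIntegrable (fun θ => f i j θ a b) volume (-π) π)
    (nsz : ℕ → Fin ν → ℕ) (c : Fin ν → ℝ)
    (hc : ∀ i, c i ∈ Set.Ioo (0 : ℝ) 1) (hcsum : ∑ i, c i = 1)
    (htot : Tendsto (fun n => ∑ i, nsz n i) atTop atTop)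
    (hratio : ∀ i, Tendsto (fun n => (nsz n i : ℝ) / ((∑ j, nsz n j : ℕ) : ℝ))
      atTop (𝓝 (c i))) :
    (∀ (l s' t' : ℕ) (Ω : Set (Fin l → ℝ)), MeasurableSet Ω →
      0 < volume Ω → volume Ω < ⊤ →
      ∀ G : (Fin l → ℝ) → Matrix (Fin s') (Fin t') ℂ,
        (∀ a b, Measurable fun θ => G θ a b) →
        (DistributedSV Ω G (fun n => blockMat ν s t f (nsz n)) ↔
          DistributedSV Ω G (fun n => blockMatTilde ν s t f (nsz n)))) ∧
    (∀ hst : s = t,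
      (∀ n, ((blockMat ν s t f (nsz n)).submatrix id
        (sigCast ν s t (nsz n) hst)).IsHermitian) →
      (∀ n, ((blockMatTilde ν s t f (nsz n)).submatrix id
        (sigCast ν s t (nsz n) hst)).IsHermitian) →
      ∀ (l s' : ℕ) (Ω : Set (Fin l → ℝ)), MeasurableSet Ω →
        0 < volume Ω → volume Ω < ⊤ →
        ∀ G : (Fin l → ℝ) → Matrix (Fin s') (Fin s') ℂ,
          (∀ a b, Measurable fun θ => G θ a b) →
          (DistributedEig Ω G (fun n => (blockMat ν s t f (nsz n)).submatrix id
              (sigCast ν s t (nsz n) hst)) ↔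
            DistributedEig Ω G (fun n => (blockMatTilde ν s t f (nsz n)).submatrix id
              (sigCast ν s t (nsz n) hst)))) := by
  have hN : ∀ n, (0:ℝ) ≤ ((∑ i, nsz n i : ℕ) : ℝ) := fun n => by positivity
  have hC : ∀ n, (Fintype.card ((i : Fin ν) × (Fin (nsz n i) × Fin s)) : ℝ) ≤
      (s : ℝ) * ((∑ i, nsz n i : ℕ) : ℝ) := fun n => by
    rw [card_row]; push_cast; rw [mul_comm]
  have hk : ∀ (N m : ℕ), N ≤ m → ‖((m : ℕ) : ℂ)⁻¹‖ * (N : ℝ) ≤ 1 := by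
    intro N m h
    rw [norm_inv, Complex.norm_natCast]
    rcases Nat.eq_zero_or_pos m with rfl | hm
    · simp
    · have hm' : (0 : ℝ) < m := by exact_mod_cast hm
      have h' : (N : ℝ) ≤ m := by exact_mod_cast h
      rw [inv_mul_le_iff₀ hm']
      linarith
  have hsm := smallTN_diff f hf nsz htot
  refine ⟨?_, ?_⟩
  · intro l s' t' Ω _ _ _ G _
    refine forall_congr' fun F => forall_congr' fun hF => forall_congr' fun hFs => ?_
    refine dist_iff (N := fun n => ((∑ i, nsz n i : ℕ) : ℝ)) (K := 1) (fun n => hk _ _ ?_)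
      (sv_main hN hC hsm F hF hFs) _
    rw [card_row, card_row]
    exact le_min (Nat.le_mul_of_pos_right _ hs) (Nat.le_mul_of_pos_right _ ht)
  · intro hst
    subst hst
    intro hA hB l s' Ω _ _ _ G _
    refine forall_congr' fun F => forall_congr' fun hF => forall_congr' fun hFs => ?_
    refine dist_iff (N := fun n => ((∑ i, nsz n i : ℕ) : ℝ)) (K := 1) (fun n => hk _ _ ?_)
      (eig_main hA hB hN hC (SmallTN.res hA hB hN hsm) F hF hFs) _
    rw [card_row]
    exact Nat.le_mul_of_pos_right _ hs

end
end
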